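/- Let s be an even integer with s ≥ 6, let N ≥ 2s, and let x,y ∈ SO(3) with ω(y⁻¹x) ≥ π/(2(N+1)); write ω = ω(y⁻¹x). Then for all i,k ∈ {1,2,3}: |X_i^x X_i^x X_k^y σ_N(x,y)| ≤ 1.2·c_{3,s}/((N+1)^{s−3}·ω^s); and for i,j,n pairwise distinct: |X_j^x X_i^x σ_N(x,y) − (ε_{jin}/2)·X_n^x σ_N(x,y)| ≤ c_{2,s}/((N+1)^{s−2}·ω^s), and for every k ∈ {i,j,n}: |X_j^x X_i^x X_k^y σ_N(x,y) − (ε_{jin}/2)·X_n^x X_k^y σ_N(x,y)| ≤ 1.2·c_{3,s}/((N+1)^{s−3}·ω^s). -/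

import Mathlib

noncomputable section

abbrev Mat3 := Matrix (Fin 3) (Fin 3) ℝ

/-- membership in SO(3) -/
def IsSO3 (x : Mat3) : Prop := x.transpose * x = 1 ∧ x.det = 1

/-- rotation angle -/
def rotAngle (x : Mat3) : ℝ := Real.arccos ((Matrix.trace x - 1) / 2)

/-- generators of so(3) -/
def Lgen : Fin 3 → Mat3 :=
  ![!![0, 0, 0; 0, 0, -1; 0, 1, 0],
    !![0, 0, 1; 0, 0, 0; -1, 0, 0],
    !![0, -1, 0; 1, 0, 0; 0, 0, 0]]

/-- derivative in the first variable along generator `i` -/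
def Xx (i : Fin 3) (f : Mat3 → Mat3 → ℝ) : Mat3 → Mat3 → ℝ :=
  fun x y => deriv (fun t : ℝ => f (x * NormedSpace.exp (t • Lgen i)) y) 0

/-- derivative in the second variable along generator `i` -/
def Xy (i : Fin 3) (f : Mat3 → Mat3 → ℝ) : Mat3 → Mat3 → ℝ :=
  fun x y => deriv (fun t : ℝ => f x (y * NormedSpace.exp (t • Lgen i))) 0

/-- iterated integrals of the sign of the Chebyshev polynomial: the perfect B-spline chain -/
def fspline (s : ℕ) : ℕ → ℝ → ℝ
  | 0 => fun x => (-1 : ℝ) ^ (s - 1) * Real.sign ((Polynomial.Chebyshev.U ℝ ((s : ℤ) - 1)).eval x)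
  | (k + 1) => fun x => ∫ t in (-1 : ℝ)..x, fspline s k t

/-- the scaled perfect B-spline g̃_{s-1} -/
def gtilde (s : ℕ) (x : ℝ) : ℝ := fspline s (s - 1) (2 * x)

/-- discrete norm ‖g̃‖_{1,N} -/
def gnorm (s N : ℕ) : ℝ :=
  ∑ k ∈ Finset.Icc (-(N : ℤ)) (N : ℤ), gtilde s ((k : ℝ) / (2 * ((N : ℝ) + 1)))

/-- the trigonometric kernel σ̃_N (real-valued) -/
def sigmaT (s N : ℕ) (t : ℝ) : ℝ :=
  ((1 / (gnorm s N : ℂ)) *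
      ∑ k ∈ Finset.Icc (-(N : ℤ)) (N : ℤ),
        (gtilde s ((k : ℝ) / (2 * ((N : ℝ) + 1))) : ℂ) * Complex.exp ((k : ℂ) * t * Complex.I)).re

/-- the zonal kernel σ_N on SO(3) -/
def sigmaK (s N : ℕ) (x y : Mat3) : ℝ := sigmaT s N (rotAngle (y⁻¹ * x))

/-- rotation axis components -/
def axisComp : Fin 3 → Mat3 → ℝ :=
  ![fun x => (x 2 1 - x 1 2) / (2 * Real.sin (rotAngle x)),
    fun x => (x 0 2 - x 2 0) / (2 * Real.sin (rotAngle x)),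
    fun x => (x 1 0 - x 0 1) / (2 * Real.sin (rotAngle x))]

/-- Levi-Civita symbol on `Fin 3` -/
def eps3 (a b c : Fin 3) : ℝ :=
  if (a, b, c) = (0, 1, 2) ∨ (a, b, c) = (1, 2, 0) ∨ (a, b, c) = (2, 0, 1) then 1
  else if (a, b, c) = (2, 1, 0) ∨ (a, b, c) = (1, 0, 2) ∨ (a, b, c) = (0, 2, 1) then -1
  else 0

/-- constants c_{l,s} -/
def cConst : ℕ → ℕ → ℝ
  | 0, s => 1.02 * (Nat.factorial (s - 1)) * 2 ^ s * s
  | 1, s => 1.02 * (Nat.factorial (s - 1)) * 2 ^ s * (2 * s)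
  | 2, s => 1.02 * (Nat.factorial (s - 1)) * 2 ^ s * (4 * s + 1)
  | _, s => 1.02 * (Nat.factorial (s - 1)) * 2 ^ s * (9 * s - 2)

/-- ζ(m) for natural m -/
def zetaNat (m : ℕ) : ℝ := ∑' n : ℕ, (1 : ℝ) / ((n : ℝ) + 1) ^ m

/-- constants C_{i,s} = 124 c_{i,s} ζ(s-2) -/
def CConst (i s : ℕ) : ℝ := 124 * cConst i s * zetaNat (s - 2)

end

open scoped Real

/-!
A zonal kernel is `φ (ω (y⁻¹ x))` for a function `φ` of the rotation angle, here a polynomial in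
`cos`. Writing `y⁻¹ x` by Rodrigues' formula as the rotation about the unit axis `ν` through the
angle `ω`, one finds the covariant Hessian `φ'' ν νᵀ + ½ cot (ω / 2) φ' (1 - ν νᵀ)`, together with
a third-order analogue. Since `cot (ω / 2) ≤ 2 / ω` is at most a multiple of `N + 1`, everything
reduces to the decay of `φ', φ'', φ'''` for `φ = σ̃_N`.

By orthogonality of `sign U_{s-1}` to the polynomials of degree below `s - 1`, the perfect B-spline
vanishes to high order at `±1`, so that integrating by parts `s` times bounds its Fourier moments
by a multiple of `|ξ|⁻ˢ`. Poisson summation turns the sum defining `σ̃_N` into the sum of these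
moments over a shifted lattice, dominated by the term at `(N + 1) ω`; the same summation at
frequency zero compares the discrete norm of the spline with `N + 1` times its integral.
-/

section SplineChain

open MeasureTheory intervalIntegral

variable {s : ℕ} {E : Type*} [NormedAddCommGroup E] [NormedSpace ℝ E]

/-- The knots of the perfect spline: the zeros of `U_{s-1}` together with the endpoints `±1`, in
increasing order. -/
noncomputable def knot (s k : ℕ) : ℝ := -Real.cos (k * (π / s))

lemma knot_zero (s : ℕ) : knot s 0 = -1 := by simp [knot]

lemma knot_self (hs : s ≠ 0) : knot s s = 1 := by
  rw [knot, mul_div_cancel₀ π (by exact_mod_cast hs), Real.cos_pi, neg_neg]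

lemma knot_mem (s k : ℕ) : knot s k ∈ Set.Icc (-1 : ℝ) 1 :=
  ⟨neg_le_neg (Real.cos_le_one _), neg_le.1 (Real.neg_one_le_cos _)⟩

lemma knot_angle_mem {k : ℕ} (hk : k ≤ s) : (k : ℝ) * (π / s) ∈ Set.Icc 0 π := by
  refine ⟨by positivity, ?_⟩
  rw [mul_div_left_comm]
  exact mul_le_of_le_one_right Real.pi_pos.le (div_le_one_of_le₀ (by exact_mod_cast hk) (by simp))

lemma knot_lt_succ {k : ℕ} (hk : k < s) : knot s k < knot s (k + 1) := by
  have hs : (0 : ℝ) < s := by exact_mod_cast (Nat.zero_le k).trans_lt hk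
  refine neg_lt_neg (Real.strictAntiOn_cos (knot_angle_mem hk.le) (knot_angle_mem hk) ?_)
  gcongr
  exact k.lt_succ_self

lemma exists_angle_of_mem_Ioo_knot {k : ℕ} (hk : k < s) {x : ℝ}
    (hx : x ∈ Set.Ioo (knot s k) (knot s (k + 1))) :
    ∃ ψ ∈ Set.Ioo 0 π, Real.cos ψ = -x ∧ k * π < s * ψ ∧ s * ψ < (k + 1) * π := by
  have hs : (0 : ℝ) < s := by exact_mod_cast (Nat.zero_le k).trans_lt hk
  have hlo : k * (π / s) < Real.arccos (-x) := by
    rw [← Real.arccos_cos (knot_angle_mem hk.le).1 (knot_angle_mem hk.le).2]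
    exact Real.arccos_lt_arccos (neg_le_neg (hx.2.le.trans (knot_mem s _).2))
      (neg_lt.1 hx.1) (Real.cos_le_one _)
  have hhi : Real.arccos (-x) < (k + 1 : ℕ) * (π / s) := by
    rw [← Real.arccos_cos (knot_angle_mem hk).1 (knot_angle_mem hk).2]
    exact Real.arccos_lt_arccos (Real.neg_one_le_cos _) (lt_neg.1 hx.2)
      (neg_le.1 ((knot_mem s k).1.trans hx.1.le))
  refine ⟨Real.arccos (-x), ⟨(knot_angle_mem hk.le).1.trans_lt hlo,
    hhi.trans_le (knot_angle_mem hk).2⟩, Real.cos_arccos ?_ ?_, ?_, ?_⟩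
  · linarith [hx.2, (knot_mem s (k + 1)).2]
  · linarith [hx.1, (knot_mem s k).1]
  · rwa [mul_div_assoc', div_lt_iff₀' hs] at hlo
  · rwa [mul_div_assoc', lt_div_iff₀' hs, Nat.cast_succ] at hhi

lemma fspline_zero_eq {k : ℕ} (hs : Even s) (hk : k < s) {x : ℝ}
    (hx : x ∈ Set.Ioo (knot s k) (knot s (k + 1))) : fspline s 0 x = (-1) ^ k := by
  obtain ⟨ψ, ⟨hψ0, hψπ⟩, hcos, hlo, hhi⟩ := exists_angle_of_mem_Ioo_knot hk hx
  have hsin : 0 < Real.sin ψ := Real.sin_pos_of_pos_of_lt_pi hψ0 hψπ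
  have hpos : 0 < (-1) ^ k * Real.sin (s * ψ) := by
    rw [← Real.sin_sub_nat_mul_pi]
    exact Real.sin_pos_of_pos_of_lt_pi (by linarith) (by linarith)
  have hU : (Polynomial.Chebyshev.U ℝ ((s : ℤ) - 1)).eval x * Real.sin ψ =
      -Real.sin (s * ψ) := by
    have h := Polynomial.Chebyshev.U_real_cos (π - ψ) ((s : ℤ) - 1)
    have e : (((s : ℤ) - 1 : ℤ) + 1 : ℝ) * (π - ψ) = -(s * ψ - s * π) := by push_cast; ring
    rwa [Real.cos_pi_sub, Real.sin_pi_sub, hcos, neg_neg, e, Real.sin_neg,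
      Real.sin_sub_nat_mul_pi, hs.neg_one_pow, one_mul] at h
  have hodd : Odd (s - 1) := Nat.Even.sub_odd (by omega) hs odd_one
  simp only [fspline, hodd.neg_one_pow]
  rcases neg_one_pow_eq_or ℝ k with h | h <;> rw [h] at hpos ⊢
  · rw [Real.sign_of_neg (by nlinarith)]; ring
  · rw [Real.sign_of_pos (by nlinarith)]; ring

lemma abs_fspline_zero_le (s : ℕ) (x : ℝ) : |fspline s 0 x| ≤ 1 := by
  rw [fspline, abs_mul, abs_neg_one_pow, one_mul]
  rcases Real.sign_apply_eq ((Polynomial.Chebyshev.U ℝ ((s : ℤ) - 1)).eval x) with h | h | h <;>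
    simp [h]

lemma measurable_fspline_zero (s : ℕ) : Measurable (fspline s 0) := by
  have hsign : Measurable Real.sign := Measurable.ite measurableSet_Iio measurable_const
    (Measurable.ite measurableSet_Ioi measurable_const measurable_const)
  exact (hsign.comp (Polynomial.continuous _).measurable).const_mul _

lemma fspline_succ (s k : ℕ) (x : ℝ) :
    fspline s (k + 1) x = ∫ t in (-1 : ℝ)..x, fspline s k t := rfl

lemma fspline_succ_neg_one (s k : ℕ) : fspline s (k + 1) (-1) = 0 := integral_same

lemma intervalIntegrable_fspline (s : ℕ) : ∀ (k : ℕ) (a b : ℝ),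
    IntervalIntegrable (fspline s k) volume a b
  | 0, _, _ => (intervalIntegrable_const (c := (1 : ℝ))).mono_fun
      (measurable_fspline_zero s).aestronglyMeasurable
      (Filter.Eventually.of_forall fun x => by simpa using abs_fspline_zero_le s x)
  | k + 1, _, _ => (continuous_primitive (intervalIntegrable_fspline s k) (-1)).intervalIntegrable
      _ _

lemma intervalIntegrable_fspline_smul (s k : ℕ) {φ : ℝ → E} (hφ : Continuous φ) (a b : ℝ) :
    IntervalIntegrable (fun x => fspline s k x • φ x) volume a b :=
  (intervalIntegrable_fspline s k a b).smul_continuousOn hφ.continuousOn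

lemma continuous_fspline_succ (s k : ℕ) : Continuous (fspline s (k + 1)) :=
  continuous_primitive (intervalIntegrable_fspline s k) (-1)

lemma fspline_succ_sub (s k : ℕ) (a b : ℝ) :
    fspline s (k + 1) b - fspline s (k + 1) a = ∫ t in a..b, fspline s k t :=
  integral_interval_sub_left (intervalIntegrable_fspline s k _ _)
    (intervalIntegrable_fspline s k _ _)

lemma continuousAt_fspline_zero {x : ℝ}
    (hx : (Polynomial.Chebyshev.U ℝ ((s : ℤ) - 1)).eval x ≠ 0) :
    ContinuousAt (fspline s 0) x := by
  have hc := (Polynomial.Chebyshev.U ℝ ((s : ℤ) - 1)).continuous.continuousAt (x := x)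
  refine continuousAt_const.mul ?_
  rcases hx.lt_or_gt with h | h
  · refine (continuousAt_const (y := (-1 : ℝ))).congr ?_
    filter_upwards [hc.eventually_lt continuousAt_const h] with y hy
    rw [Real.sign_of_neg hy]
  · refine (continuousAt_const (y := (1 : ℝ))).congr ?_
    filter_upwards [continuousAt_const.eventually_lt hc h] with y hy
    rw [Real.sign_of_pos hy]

lemma hasDerivAt_fspline_succ (k : ℕ) {x : ℝ}
    (hx : (Polynomial.Chebyshev.U ℝ ((s : ℤ) - 1)).eval x ≠ 0) :
    HasDerivAt (fspline s (k + 1)) (fspline s k x) x := by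
  refine integral_hasDerivAt_right (intervalIntegrable_fspline s k _ _) ?_ ?_
  all_goals cases k with
    | zero => first
      | exact (measurable_fspline_zero s).stronglyMeasurable.stronglyMeasurableAtFilter
      | exact continuousAt_fspline_zero hx
    | succ k => first
      | exact (continuous_fspline_succ s k).stronglyMeasurable.stronglyMeasurableAtFilter
      | exact (continuous_fspline_succ s k).continuousAt

lemma integral_fspline_zero_smul_of_mem {k : ℕ} (hs : Even s) (hk : k < s) (φ : ℝ → E) {x : ℝ}
    (hx : x ∈ Set.Icc (knot s k) (knot s (k + 1))) :
    ∫ t in knot s k..x, fspline s 0 t • φ t = (-1 : ℝ) ^ k • ∫ t in knot s k..x, φ t := by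
  rw [← intervalIntegral.integral_smul]
  refine integral_congr_uIoo fun t ht => ?_
  rw [Set.uIoo_of_le hx.1] at ht
  simp only [fspline_zero_eq hs hk ⟨ht.1, ht.2.trans_le hx.2⟩]

variable [CompleteSpace E]

lemma integral_fspline_smul_deriv (hs : s ≠ 0) (k : ℕ) {φ φ' : ℝ → E}
    (hφ : ∀ x, HasDerivAt φ (φ' x) x) (hφ' : Continuous φ') :
    ∫ x in (-1 : ℝ)..1, fspline s (k + 1) x • φ' x =
      fspline s (k + 1) 1 • φ 1 - ∫ x in (-1 : ℝ)..1, fspline s k x • φ x := by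
  have hφc : Continuous φ := continuous_iff_continuousAt.2 fun x => (hφ x).continuousAt
  have hU : Polynomial.Chebyshev.U ℝ ((s : ℤ) - 1) ≠ 0 :=
    Polynomial.Chebyshev.U_ne_zero ℝ _ (by omega)
  have h := integral_eq_of_hasDerivAt_off_countable (a := -1) (b := 1)
    (fun x => fspline s (k + 1) x • φ x)
    (fun x => fspline s (k + 1) x • φ' x + fspline s k x • φ x)
    (Polynomial.finite_setOfPred_isRoot hU).countable
    ((continuous_fspline_succ s k).smul hφc).continuousOn
    (fun x hx => (hasDerivAt_fspline_succ k hx.2).smul (hφ x))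
    ((intervalIntegrable_fspline_smul s _ hφ' _ _).add
      (intervalIntegrable_fspline_smul s _ hφc _ _))
  rw [integral_add (intervalIntegrable_fspline_smul s _ hφ' _ _)
    (intervalIntegrable_fspline_smul s _ hφc _ _), fspline_succ_neg_one, zero_smul, sub_zero] at h
  exact eq_sub_of_add_eq h

lemma integral_fspline_zero_smul_deriv (hs : Even s) (hs0 : s ≠ 0) {φ φ' : ℝ → E}
    (hφ : ∀ x, HasDerivAt φ (φ' x) x) (hφ' : Continuous φ') :
    ∫ x in (-1 : ℝ)..1, fspline s 0 x • φ' x =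
      ∑ k ∈ Finset.range s, (-1 : ℝ) ^ k • (φ (knot s (k + 1)) - φ (knot s k)) := by
  have h := sum_integral_adjacent_intervals (a := knot s) (n := s) fun _ _ =>
    intervalIntegrable_fspline_smul s 0 hφ' _ _
  rw [knot_zero, knot_self hs0] at h
  rw [← h]
  refine Finset.sum_congr rfl fun k hk => ?_
  have hk : k < s := Finset.mem_range.1 hk
  rw [integral_fspline_zero_smul_of_mem hs hk _ ⟨(knot_lt_succ hk).le, le_rfl⟩,
    integral_eq_sub_of_hasDerivAt (fun x _ => hφ x) (hφ'.intervalIntegrable _ _)]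

end SplineChain

section AlternatingSums

lemma cos_half_mul_sum_neg_one_pow_mul_cos_sub (θ : ℝ) (n : ℕ) :
    Real.cos (θ / 2) *
        ∑ k ∈ Finset.range n, (-1) ^ k * (Real.cos (k * θ) - Real.cos ((k + 1 : ℕ) * θ)) =
      -((-1) ^ n * Real.sin (θ / 2) * Real.sin (n * θ)) := by
  induction n with
  | zero => simp
  | succ n ih =>
    have e₁ : (n : ℝ) * θ = (2 * n + 1) * (θ / 2) - θ / 2 := by ring
    have e₂ : ((n + 1 : ℕ) : ℝ) * θ = (2 * n + 1) * (θ / 2) + θ / 2 := by push_cast; ring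
    rw [Finset.sum_range_succ, mul_add, ih, e₁, e₂, Real.cos_sub, Real.cos_add, Real.sin_sub,
      Real.sin_add]
    ring

/-- The sum of the increments of a function over the grid `k π / s` of `[0, π]`, taken with
alternating signs; under `x = -cos θ` it is the integral of a derivative against `fspline s 0`. -/
noncomputable def altSum (s : ℕ) : (ℝ → ℝ) →ₗ[ℝ] ℝ where
  toFun f := ∑ k ∈ Finset.range s, (-1) ^ k * (f (k * (π / s)) - f ((k + 1 : ℕ) * (π / s)))
  map_add' f g := by
    simp only [Pi.add_apply, ← Finset.sum_add_distrib]
    exact Finset.sum_congr rfl fun _ _ => by ring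
  map_smul' c f := by
    simp only [Pi.smul_apply, smul_eq_mul, RingHom.id_apply, Finset.mul_sum]
    exact Finset.sum_congr rfl fun _ _ => by ring

variable {s : ℕ}

lemma altSum_apply (s : ℕ) (f : ℝ → ℝ) :
    altSum s f =
      ∑ k ∈ Finset.range s, (-1) ^ k * (f (k * (π / s)) - f ((k + 1 : ℕ) * (π / s))) := rfl

lemma altSum_cos_eq_zero {m : ℤ} (hm : |m| < s) :
    altSum s (fun θ => Real.cos (m * θ)) = 0 := by
  have hs : (0 : ℝ) < s := by exact_mod_cast (abs_nonneg m).trans_lt hm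
  have hcos : Real.cos (m * (π / s) / 2) ≠ 0 := by
    have hm' : |(m : ℝ)| / s < 1 := (div_lt_one hs).2 (by exact_mod_cast hm)
    have h : |(m : ℝ) * (π / s) / 2| < π / 2 := by
      have e : (m : ℝ) * (π / s) / 2 = m / s * (π / 2) := by ring
      rw [e, abs_mul, abs_div, abs_of_pos hs, abs_of_pos Real.pi_div_two_pos]
      exact mul_lt_of_lt_one_left Real.pi_div_two_pos hm'
    exact (Real.cos_pos_of_mem_Ioo (abs_lt.1 h)).ne'
  have h := cos_half_mul_sum_neg_one_pow_mul_cos_sub (m * (π / s)) s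
  have e : (s : ℝ) * (m * (π / s)) = m * π := by field_simp
  rw [e, Real.sin_int_mul_pi, mul_zero, neg_zero] at h
  simp only [altSum_apply, mul_left_comm (m : ℝ)]
  exact (mul_eq_zero.1 h).resolve_left hcos

lemma altSum_cos_self (hs : s ≠ 0) : altSum s (fun θ => Real.cos (s * θ)) = 2 * s := by
  have h (k : ℕ) : Real.cos (s * (k * (π / s))) = (-1) ^ k := by
    rw [← Real.cos_nat_mul_pi k]; congr 1; field_simp
  have h₂ (k : ℕ) : (-1 : ℝ) ^ k * ((-1) ^ k - (-1) ^ (k + 1)) = 2 := by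
    rw [pow_succ, mul_neg_one, sub_neg_eq_add, mul_add, ← mul_pow]; norm_num
  simp only [altSum_apply, h, h₂, Finset.sum_const, Finset.card_range, nsmul_eq_mul]
  ring

lemma altSum_one_add_cos_pow_succ_mul_cos (s j : ℕ) (m : ℝ) :
    altSum s (fun θ => (1 + Real.cos θ) ^ (j + 1) * Real.cos (m * θ)) =
      altSum s (fun θ => (1 + Real.cos θ) ^ j * Real.cos (m * θ)) +
        (1 / 2 * altSum s (fun θ => (1 + Real.cos θ) ^ j * Real.cos ((m + 1) * θ)) +
        1 / 2 * altSum s (fun θ => (1 + Real.cos θ) ^ j * Real.cos ((m - 1) * θ))) := by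
  simp only [← smul_eq_mul (1 / 2 : ℝ), ← map_smul, ← map_add]
  congr 1
  funext θ
  simp only [Pi.add_apply, Pi.smul_apply, smul_eq_mul, add_mul, sub_mul, one_mul, Real.cos_add,
    Real.cos_sub]
  ring

lemma altSum_one_add_cos_pow_mul_cos_eq_zero : ∀ (j : ℕ) (m : ℤ), |m| + j < s →
    altSum s (fun θ => (1 + Real.cos θ) ^ j * Real.cos (m * θ)) = 0
  | 0, m, h => by simpa using altSum_cos_eq_zero (by simpa using h)
  | j + 1, m, h => by
    push_cast at h
    have h₀ := altSum_one_add_cos_pow_mul_cos_eq_zero j m (by omega)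
    have h₁ := altSum_one_add_cos_pow_mul_cos_eq_zero j (m + 1) (by
      have := abs_add_le m 1; rw [abs_one] at this; omega)
    have h₂ := altSum_one_add_cos_pow_mul_cos_eq_zero j (m - 1) (by
      have := abs_sub m 1; rw [abs_one] at this; omega)
    push_cast at h₁ h₂
    rw [altSum_one_add_cos_pow_succ_mul_cos, h₀, h₁, h₂]
    ring

lemma altSum_one_add_cos_pow_mul_cos_of_add_eq : ∀ {j m : ℕ}, 1 ≤ m → m + j = s →
    altSum s (fun θ => (1 + Real.cos θ) ^ j * Real.cos (m * θ)) = (1 / 2) ^ j * (2 * s)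
  | 0, m, hm, h => by
    obtain rfl : m = s := h
    simpa using altSum_cos_self (Nat.one_le_iff_ne_zero.1 hm)
  | j + 1, m, hm, h => by
    have h₀ := altSum_one_add_cos_pow_mul_cos_eq_zero (s := s) j m (by
      rw [Nat.abs_cast]; omega)
    have h₁ := altSum_one_add_cos_pow_mul_cos_of_add_eq (j := j) (m := m + 1)
      (by omega) (by omega)
    have h₂ := altSum_one_add_cos_pow_mul_cos_eq_zero (s := s) j (m - 1) (by
      rw [abs_of_nonneg (by omega)]; omega)
    push_cast at h₀ h₁ h₂
    rw [altSum_one_add_cos_pow_succ_mul_cos, h₀, h₁, h₂]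
    ring

lemma altSum_one_add_cos_pow_eq_zero {j : ℕ} (hj : j < s) :
    altSum s (fun θ => (1 + Real.cos θ) ^ j) = 0 := by
  simpa using altSum_one_add_cos_pow_mul_cos_eq_zero (s := s) j 0 (by simpa using hj)

lemma altSum_one_add_cos_pow_self (hs : 2 ≤ s) :
    altSum s (fun θ => (1 + Real.cos θ) ^ s) = (1 / 2) ^ (s - 1) * (2 * s) := by
  obtain ⟨j, rfl⟩ : ∃ j, s = j + 1 := ⟨s - 1, by omega⟩
  have h := altSum_one_add_cos_pow_succ_mul_cos (j + 1) j 0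
  have h₀ := altSum_one_add_cos_pow_eq_zero j.lt_succ_self
  have h₁ := altSum_one_add_cos_pow_mul_cos_of_add_eq (s := j + 1) le_rfl (add_comm 1 j)
  simp only [zero_mul, Real.cos_zero, mul_one, zero_add, zero_sub, neg_mul, Real.cos_neg,
    Nat.cast_one, one_mul] at h h₁
  rw [h, h₀, h₁, Nat.add_sub_cancel]
  ring

end AlternatingSums

section EndpointValues

variable {s : ℕ}

lemma hasDerivAt_one_sub_pow (k : ℕ) (x : ℝ) :
    HasDerivAt (fun x : ℝ => (1 - x) ^ (k + 1)) (-(k + 1) * (1 - x) ^ k) x :=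
  (((hasDerivAt_id x).const_sub 1).fun_pow (k + 1)).congr_deriv (by push_cast; simp; ring)

lemma integral_fspline_zero_mul_one_sub_pow (hs : Even s) (hs0 : s ≠ 0) (k : ℕ) :
    (k + 1) * ∫ x in (-1 : ℝ)..1, fspline s 0 x * (1 - x) ^ k =
      altSum s (fun θ => (1 + Real.cos θ) ^ (k + 1)) := by
  have h := integral_fspline_zero_smul_deriv hs hs0 (hasDerivAt_one_sub_pow k) (by fun_prop)
  simp only [smul_eq_mul, mul_left_comm _ (-((k : ℝ) + 1)),
    intervalIntegral.integral_const_mul] at h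
  rw [← neg_inj, ← neg_mul, h, altSum_apply, ← Finset.sum_neg_distrib]
  refine Finset.sum_congr rfl fun i _ => ?_
  simp only [knot]
  ring

lemma integral_fspline_mul_one_sub_pow (hs0 : s ≠ 0) : ∀ k j : ℕ,
    ∫ x in (-1 : ℝ)..1, fspline s j x * (1 - x) ^ k =
      k.factorial * fspline s (j + k + 1) 1
  | 0, j => by simp [fspline_succ]
  | k + 1, j => by
    have h := integral_fspline_smul_deriv hs0 j (hasDerivAt_one_sub_pow k) (by fun_prop)
    simp only [smul_eq_mul, mul_left_comm _ (-((k : ℝ) + 1)),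
      intervalIntegral.integral_const_mul, sub_self, zero_pow k.succ_ne_zero, mul_zero, zero_sub,
      integral_fspline_mul_one_sub_pow hs0 k (j + 1)] at h
    rw [← neg_inj, ← h, Nat.factorial_succ, show j + 1 + k + 1 = j + (k + 1) + 1 by ring]
    push_cast
    ring

lemma factorial_mul_fspline_succ_one (hs : Even s) (hs0 : s ≠ 0) (k : ℕ) :
    (k + 1).factorial * fspline s (k + 1) 1 =
      altSum s (fun θ => (1 + Real.cos θ) ^ (k + 1)) := by
  rw [← integral_fspline_zero_mul_one_sub_pow hs hs0, integral_fspline_mul_one_sub_pow hs0,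
    Nat.factorial_succ, zero_add]
  push_cast
  ring

lemma fspline_succ_one_eq_zero {k : ℕ} (hs : Even s) (hk : k + 1 < s) :
    fspline s (k + 1) 1 = 0 := by
  have h := factorial_mul_fspline_succ_one hs (by omega) k
  rw [altSum_one_add_cos_pow_eq_zero hk] at h
  exact (mul_eq_zero.1 h).resolve_left (by positivity)

lemma factorial_mul_fspline_self_one (hs : Even s) (hs2 : 2 ≤ s) :
    (s - 1).factorial * fspline s s 1 = 2 * (1 / 2) ^ (s - 1) := by
  obtain ⟨k, rfl⟩ : ∃ k, s = k + 1 := ⟨s - 1, by omega⟩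
  have h := factorial_mul_fspline_succ_one hs (by omega) k
  rw [altSum_one_add_cos_pow_self hs2, Nat.factorial_succ] at h
  push_cast at h
  refine mul_left_cancel₀ (show (k + 1 : ℝ) ≠ 0 by positivity) ?_
  rw [← mul_assoc, Nat.add_sub_cancel, h]
  ring

end EndpointValues

section SupBounds

variable {s : ℕ}

lemma exists_mem_Icc_succ {α : Type*} [LinearOrder α] (a : ℕ → α) {x : α} : ∀ n : ℕ,
    x ∈ Set.Icc (a 0) (a (n + 1)) → ∃ k ≤ n, x ∈ Set.Icc (a k) (a (k + 1))
  | 0, hx => ⟨0, le_rfl, hx⟩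
  | n + 1, hx => by
    rcases le_total (a (n + 1)) x with h | h
    · exact ⟨n + 1, le_rfl, h, hx.2⟩
    · obtain ⟨k, hk, hm⟩ := exists_mem_Icc_succ a n ⟨hx.1, h⟩
      exact ⟨k, hk.trans n.le_succ, hm⟩

lemma exists_mem_Icc_knot (hs : s ≠ 0) {x : ℝ} (hx : x ∈ Set.Icc (-1 : ℝ) 1) :
    ∃ k < s, x ∈ Set.Icc (knot s k) (knot s (k + 1)) := by
  obtain ⟨n, rfl⟩ := Nat.exists_eq_succ_of_ne_zero hs
  rw [← knot_zero (n + 1), ← knot_self hs] at hx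
  obtain ⟨k, hk, hxk⟩ := exists_mem_Icc_succ (knot (n + 1)) n hx
  exact ⟨k, Nat.lt_succ_of_le hk, hxk⟩

lemma knot_succ_sub_knot_le (s k : ℕ) : knot s (k + 1) - knot s k ≤ π / s := by
  have h := (le_abs_self _).trans (Real.abs_cos_sub_cos_le (k * (π / s)) ((k + 1 : ℕ) * (π / s)))
  have e : (k * (π / s) : ℝ) - (k + 1 : ℕ) * (π / s) = -(π / s) := by push_cast; ring
  rw [e, abs_neg, abs_of_nonneg (by positivity)] at h
  unfold knot
  linarith

lemma fspline_one_eq_of_mem {k : ℕ} (hs : Even s) (hk : k < s) {x : ℝ}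
    (hx : x ∈ Set.Icc (knot s k) (knot s (k + 1))) :
    fspline s 1 x = fspline s 1 (knot s k) + (-1) ^ k * (x - knot s k) := by
  have h := integral_fspline_zero_smul_of_mem hs hk (fun _ => (1 : ℝ)) hx
  simp only [smul_eq_mul, mul_one, integral_one, ← fspline_succ_sub] at h
  linear_combination h

lemma fspline_one_knot (hs : Even s) : ∀ {k : ℕ}, k ≤ s → fspline s 1 (knot s k) =
    ∑ j ∈ Finset.range k, (-1) ^ j * (Real.cos (j * (π / s)) - Real.cos ((j + 1 : ℕ) * (π / s)))
  | 0, _ => by simp [knot_zero, fspline_succ_neg_one]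
  | k + 1, hk => by
    rw [fspline_one_eq_of_mem hs hk ⟨(knot_lt_succ hk).le, le_rfl⟩,
      fspline_one_knot hs (Nat.le_of_succ_le hk), Finset.sum_range_succ, knot, knot]
    ring

lemma cos_mul_fspline_one_knot (hs : Even s) {k : ℕ} (hk : k ≤ s) :
    Real.cos (π / s / 2) * fspline s 1 (knot s k) =
      -((-1) ^ k * Real.sin (π / s / 2) * Real.sin (k * (π / s))) := by
  rw [fspline_one_knot hs hk, cos_half_mul_sum_neg_one_pow_mul_cos_sub]

lemma fspline_two_knot_succ {k : ℕ} (hs : Even s) (hk : k < s) :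
    fspline s 2 (knot s (k + 1)) = fspline s 2 (knot s k) +
      (knot s (k + 1) - knot s k) *
        (fspline s 1 (knot s k) + fspline s 1 (knot s (k + 1))) / 2 := by
  have hle := (knot_lt_succ hk).le
  have h : fspline s 2 (knot s (k + 1)) - fspline s 2 (knot s k) =
      ∫ t in knot s k..knot s (k + 1), (fspline s 1 (knot s k) + (-1) ^ k * (t - knot s k)) := by
    rw [fspline_succ_sub]
    refine intervalIntegral.integral_congr fun t ht => ?_
    rw [Set.uIcc_of_le hle] at ht
    exact fspline_one_eq_of_mem hs hk ht
  rw [intervalIntegral.integral_add (by simp) (Continuous.intervalIntegrable (by fun_prop) _ _),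
    intervalIntegral.integral_const_mul, intervalIntegral.integral_sub (by simp) (by simp),
    integral_id, intervalIntegral.integral_const, intervalIntegral.integral_const, smul_eq_mul,
    smul_eq_mul] at h
  linear_combination h -
    (knot s (k + 1) - knot s k) / 2 * fspline_one_eq_of_mem hs hk ⟨hle, le_rfl⟩

lemma cos_mul_fspline_two_knot (hs : Even s) : ∀ {k : ℕ}, k ≤ s →
    2 * Real.cos (π / s / 2) * Real.cos (π / s) * fspline s 2 (knot s k) =
      -((-1) ^ k * Real.sin (π / s / 2) ^ 3 * Real.sin (2 * (k * (π / s))))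
  | 0, _ => by simp [knot_zero, fspline_succ_neg_one]
  | k + 1, hk => by
    have ih := cos_mul_fspline_two_knot hs (Nat.le_of_succ_le hk)
    have h₁ := cos_mul_fspline_one_knot hs (Nat.le_of_succ_le hk)
    have h₂ := cos_mul_fspline_one_knot hs hk
    have h₃ := fspline_two_knot_succ hs hk
    simp only [knot] at ih h₁ h₂ h₃ ⊢
    set α := π / (s : ℝ)
    have e₁ : (k : ℝ) * α = (2 * k + 1) * (α / 2) - α / 2 := by ring
    have e₂ : ((k + 1 : ℕ) : ℝ) * α = (2 * k + 1) * (α / 2) + α / 2 := by push_cast; ring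
    have e₃ : Real.cos α = Real.cos (α / 2) ^ 2 - Real.sin (α / 2) ^ 2 := by
      rw [← Real.cos_two_mul', mul_div_cancel₀ α two_ne_zero]
    rw [e₁] at ih h₁ h₃
    rw [e₂] at h₂ h₃ ⊢
    rw [e₃] at ih ⊢
    rw [h₃]
    simp only [Real.sin_two_mul, Real.cos_sub, Real.cos_add, Real.sin_sub, Real.sin_add] at *
    linear_combination ih + (Real.cos (α / 2) ^ 2 - Real.sin (α / 2) ^ 2) *
      (2 * Real.sin ((2 * k + 1) * (α / 2)) * Real.sin (α / 2)) * (h₁ + h₂)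

lemma knot_half_angle_bounds (hs6 : 6 ≤ s) :
    0 < Real.sin (π / s / 2) ∧ Real.sin (π / s / 2) ≤ 1.5708 / s ∧
      0.9657 ≤ Real.cos (π / s / 2) ∧ 0.86 ≤ Real.cos (π / s) := by
  have hs : (6 : ℝ) ≤ s := by exact_mod_cast hs6
  have hα0 : 0 < π / s := by positivity
  have hα : π / s ≤ 3.1416 / 6 :=
    div_le_div₀ (by norm_num) Real.pi_lt_d4.le (by norm_num) hs
  refine ⟨Real.sin_pos_of_pos_of_lt_pi (by positivity) (by linarith [Real.pi_gt_three]),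
    (Real.sin_le (by positivity)).trans ?_, Real.one_sub_sq_div_two_le_cos.trans' (by nlinarith),
    Real.one_sub_sq_div_two_le_cos.trans' (by nlinarith)⟩
  rw [div_right_comm]
  gcongr
  linarith [Real.pi_lt_d4]

lemma abs_fspline_one_knot_le {k : ℕ} (hs : Even s) (hs6 : 6 ≤ s) (hk : k ≤ s) :
    |fspline s 1 (knot s k)| ≤ 1.63 / s := by
  obtain ⟨hsin, hsin', hcos, -⟩ := knot_half_angle_bounds hs6
  have h : 0.9657 * |fspline s 1 (knot s k)| ≤ 1.5708 / s := by
    calc _ ≤ Real.cos (π / s / 2) * |fspline s 1 (knot s k)| := by gcongr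
      _ = Real.sin (π / s / 2) * |Real.sin (k * (π / s))| := by
        rw [← abs_of_pos ((by norm_num : (0 : ℝ) < 0.9657).trans_le hcos), ← abs_mul,
          cos_mul_fspline_one_knot hs hk, abs_neg, abs_mul, abs_mul, abs_neg_one_pow, one_mul,
          abs_of_pos hsin]
      _ ≤ Real.sin (π / s / 2) := mul_le_of_le_one_right hsin.le (Real.abs_sin_le_one _)
      _ ≤ _ := hsin'
  rw [le_div_iff₀ (by positivity)] at h ⊢
  nlinarith [abs_nonneg (fspline s 1 (knot s k))]

lemma abs_fspline_one_le (hs : Even s) (hs6 : 6 ≤ s) {x : ℝ} (hx : x ∈ Set.Icc (-1 : ℝ) 1) :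
    |fspline s 1 x| ≤ 1.63 / s := by
  obtain ⟨k, hk, hxk⟩ := exists_mem_Icc_knot (s := s) (by omega) hx
  have h := fspline_one_eq_of_mem hs hk hxk
  have h' := fspline_one_eq_of_mem hs hk ⟨(knot_lt_succ hk).le, le_rfl⟩
  have hl := abs_le.1 (abs_fspline_one_knot_le hs hs6 hk.le)
  have hr := abs_le.1 (abs_fspline_one_knot_le hs hs6 (Nat.succ_le_of_lt hk))
  obtain ⟨hx₁, hx₂⟩ := hxk
  rw [abs_le]
  rcases neg_one_pow_eq_or ℝ k with hk | hk <;> rw [hk] at h h' <;> constructor <;> linarith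

lemma abs_fspline_two_knot_le {k : ℕ} (hs : Even s) (hs6 : 6 ≤ s) (hk : k ≤ s) :
    |fspline s 2 (knot s k)| ≤ 0.4 / s ^ 2 := by
  obtain ⟨hsin, hsin', hcos, hcos'⟩ := knot_half_angle_bounds hs6
  have hs' : (6 : ℝ) ≤ s := by exact_mod_cast hs6
  have hs0 : (0 : ℝ) < s := by linarith
  have h : 2 * 0.9657 * 0.86 * |fspline s 2 (knot s k)| ≤ (1.5708 / s) ^ 3 := by
    calc _ ≤ 2 * Real.cos (π / s / 2) * Real.cos (π / s) * |fspline s 2 (knot s k)| := by gcongr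
      _ = Real.sin (π / s / 2) ^ 3 * |Real.sin (2 * (k * (π / s)))| := by
        rw [← abs_of_pos (show 0 < 2 * Real.cos (π / s / 2) * Real.cos (π / s) by
            have : 0 < Real.cos (π / s / 2) := by linarith
            have : 0 < Real.cos (π / s) := by linarith
            positivity),
          ← abs_mul, cos_mul_fspline_two_knot hs hk, abs_neg, abs_mul, abs_mul, abs_neg_one_pow,
          one_mul, abs_pow, abs_of_pos hsin]
      _ ≤ Real.sin (π / s / 2) ^ 3 :=
        mul_le_of_le_one_right (pow_pos hsin 3).le (Real.abs_sin_le_one _)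
      _ ≤ _ := by gcongr
  have h' : (1.5708 / (s : ℝ)) ^ 3 ≤ 0.65 / s ^ 2 := by
    rw [div_pow, div_le_div_iff₀ (by positivity) (by positivity)]
    nlinarith [pow_pos hs0 2]
  rw [le_div_iff₀ (by positivity)] at h' ⊢
  nlinarith [mul_le_mul_of_nonneg_right h (sq_nonneg (s : ℝ))]

lemma exists_knot_near (hs : s ≠ 0) {x : ℝ} (hx : x ∈ Set.Icc (-1 : ℝ) 1) :
    ∃ j ≤ s, |x - knot s j| ≤ π / s / 2 := by
  obtain ⟨k, hk, hxk⟩ := exists_mem_Icc_knot hs hx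
  have hwidth := knot_succ_sub_knot_le s k
  rcases le_total (x - knot s k) (π / s / 2) with h | h
  · exact ⟨k, hk.le, by rwa [abs_of_nonneg (sub_nonneg.2 hxk.1)]⟩
  · exact ⟨k + 1, hk, by rw [abs_of_nonpos (sub_nonpos.2 hxk.2)]; linarith⟩

lemma abs_fspline_two_le (hs : Even s) (hs6 : 6 ≤ s) {x : ℝ} (hx : x ∈ Set.Icc (-1 : ℝ) 1) :
    |fspline s 2 x| ≤ 3 / s ^ 2 := by
  obtain ⟨j, hj, hd⟩ := exists_knot_near (s := s) (by omega) hx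
  have hinc : |fspline s 2 x - fspline s 2 (knot s j)| ≤ 1.63 / s * |x - knot s j| := by
    rw [fspline_succ_sub, ← Real.norm_eq_abs]
    exact intervalIntegral.norm_integral_le_of_norm_le_const fun t ht =>
      abs_fspline_one_le hs hs6 (Set.uIcc_subset_Icc (knot_mem s j) hx (Set.uIoc_subset_uIcc ht))
  calc |fspline s 2 x|
      ≤ |fspline s 2 x - fspline s 2 (knot s j)| + |fspline s 2 (knot s j)| := by
        simpa using abs_add_le (fspline s 2 x - fspline s 2 (knot s j)) (fspline s 2 (knot s j))
    _ ≤ 1.63 / s * (π / s / 2) + 0.4 / s ^ 2 :=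
        add_le_add (hinc.trans (by gcongr)) (abs_fspline_two_knot_le hs hs6 hj)
    _ = (1.63 * π / 2 + 0.4) / s ^ 2 := by ring
    _ ≤ 3 / s ^ 2 := by gcongr; linarith [Real.pi_lt_d4]

end SupBounds

section FourierMoments

open MeasureTheory intervalIntegral

variable {s : ℕ}

/-- The function `x ↦ x ^ l * exp (i ξ x)`, against which the Fourier moments are taken. -/
noncomputable def monoExp (ξ : ℝ) (l : ℕ) (x : ℝ) : ℂ :=
  (x : ℂ) ^ l * Complex.exp (ξ * x * Complex.I)

lemma continuous_monoExp (ξ : ℝ) (l : ℕ) : Continuous (monoExp ξ l) := by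
  unfold monoExp; fun_prop

lemma norm_monoExp (ξ : ℝ) (l : ℕ) (x : ℝ) : ‖monoExp ξ l x‖ = |x| ^ l := by
  rw [monoExp, norm_mul, norm_pow, Complex.norm_real, ← Complex.ofReal_mul,
    Complex.norm_exp_ofReal_mul_I, mul_one, Real.norm_eq_abs]

lemma hasDerivAt_monoExp (ξ : ℝ) (l : ℕ) (x : ℝ) :
    HasDerivAt (monoExp ξ l)
      ((l : ℂ) • monoExp ξ (l - 1) x + (ξ * Complex.I : ℂ) • monoExp ξ l x) x := by
  have hid : HasDerivAt (fun x : ℝ => (x : ℂ)) 1 x := (hasDerivAt_id x).ofReal_comp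
  have hexp : HasDerivAt (fun x : ℝ => Complex.exp (ξ * x * Complex.I))
      (Complex.exp (ξ * x * Complex.I) * (ξ * 1 * Complex.I)) x :=
    ((hid.const_mul (ξ : ℂ)).mul_const Complex.I).cexp
  refine ((hid.fun_pow l).mul hexp).congr_deriv ?_
  simp only [monoExp, smul_eq_mul]
  ring

/-- The `l`-th Fourier moment at frequency `ξ` of the members of the chain `f_{-1}, f_0, f_1, …`,
where `f_k = fspline s k` for `0 ≤ k` and `f_{-1}` is the distributional derivative of `f_0`
extended by zero. The moment of `f_k` has index `k + 1`. -/
noncomputable def splineMoment (s : ℕ) (ξ : ℝ) (l : ℕ) : ℕ → ℂ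
  | 0 => -∑ k ∈ Finset.range s,
      (-1 : ℝ) ^ k • (monoExp ξ l (knot s (k + 1)) - monoExp ξ l (knot s k))
  | k + 1 => ∫ x in (-1 : ℝ)..1, fspline s k x • monoExp ξ l x

lemma splineMoment_zero (s : ℕ) (ξ : ℝ) (l : ℕ) : splineMoment s ξ l 0 =
    -∑ k ∈ Finset.range s,
      (-1 : ℝ) ^ k • (monoExp ξ l (knot s (k + 1)) - monoExp ξ l (knot s k)) := rfl

lemma splineMoment_succ (s : ℕ) (ξ : ℝ) (l k : ℕ) : splineMoment s ξ l (k + 1) =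
    ∫ x in (-1 : ℝ)..1, fspline s k x • monoExp ξ l x := rfl

lemma neg_mul_splineMoment_succ (hs : Even s) (ξ : ℝ) (l : ℕ) {k : ℕ} (hk : k < s) :
    -(ξ * Complex.I) * splineMoment s ξ l (k + 1) =
      l * splineMoment s ξ (l - 1) (k + 1) + splineMoment s ξ l k := by
  have hs0 : s ≠ 0 := by omega
  have hint (l : ℕ) (c : ℂ) :
      IntervalIntegrable (fun x => c • fspline s k x • monoExp ξ l x) volume (-1) 1 :=
    (intervalIntegrable_fspline_smul s k (continuous_monoExp ξ l) _ _).const_mul c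
  have hcont : Continuous fun x =>
      (l : ℂ) • monoExp ξ (l - 1) x + (ξ * Complex.I : ℂ) • monoExp ξ l x :=
    (continuous_const.mul (continuous_monoExp _ _)).add
      (continuous_const.mul (continuous_monoExp _ _))
  have hsplit : ∫ x in (-1 : ℝ)..1, fspline s k x •
        ((l : ℂ) • monoExp ξ (l - 1) x + (ξ * Complex.I : ℂ) • monoExp ξ l x) =
      l * splineMoment s ξ (l - 1) (k + 1) + ξ * Complex.I * splineMoment s ξ l (k + 1) := by
    simp only [smul_add, smul_comm (fspline s k _) _ (monoExp _ _ _)]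
    rw [integral_add (hint _ _) (hint _ _), intervalIntegral.integral_smul,
      intervalIntegral.integral_smul]
    rfl
  suffices ∫ x in (-1 : ℝ)..1, fspline s k x •
      ((l : ℂ) • monoExp ξ (l - 1) x + (ξ * Complex.I : ℂ) • monoExp ξ l x) =
        -splineMoment s ξ l k by linear_combination hsplit - this
  cases k with
  | zero =>
    rw [integral_fspline_zero_smul_deriv hs hs0 (hasDerivAt_monoExp ξ l) hcont,
      splineMoment_zero, neg_neg]
  | succ k =>
    rw [integral_fspline_smul_deriv hs0 k (hasDerivAt_monoExp ξ l) hcont,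
      fspline_succ_one_eq_zero hs hk, zero_smul, zero_sub, splineMoment_succ]

lemma succ_descFactorial_succ_eq_add (p m : ℕ) :
    (p + 1).descFactorial (m + 1) = p.descFactorial (m + 1) + (m + 1) * p.descFactorial m := by
  rcases le_or_gt m p with h | h
  · rw [Nat.succ_descFactorial_succ, Nat.descFactorial_succ, ← add_mul]
    congr 1
    omega
  · rw [Nat.descFactorial_of_lt (Nat.succ_lt_succ h), Nat.descFactorial_of_lt h,
      Nat.descFactorial_of_lt (h.trans m.lt_succ_self), mul_zero, add_zero]

lemma pow_mul_splineMoment (hs : Even s) (ξ : ℝ) : ∀ p l j : ℕ, p + j ≤ s →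
    (-(ξ * Complex.I)) ^ p * splineMoment s ξ l (p + j) =
      ∑ m ∈ Finset.range (l + 1),
        (l.choose m * p.descFactorial m : ℕ) * splineMoment s ξ (l - m) (j + m)
  | 0, l, j, _ => by simp [Finset.sum_range_succ']
  | p + 1, 0, j, h => by
    have ih := pow_mul_splineMoment hs ξ p 0 j (by omega)
    have hrec := neg_mul_splineMoment_succ hs ξ 0 (k := p + j) (by omega)
    simp only [CharP.cast_eq_zero, zero_mul, zero_add, Finset.sum_range_one] at ih hrec ⊢
    rw [pow_succ, mul_assoc, add_right_comm, hrec, ih]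
    simp
  | p + 1, l + 1, j, h => by
    have ih := pow_mul_splineMoment hs ξ p (l + 1) j (by omega)
    have ih' := pow_mul_splineMoment hs ξ p l (j + 1) (by omega)
    have hrec := neg_mul_splineMoment_succ hs ξ (l + 1) (k := p + j) (by omega)
    rw [pow_succ, mul_assoc, add_right_comm, hrec, mul_add, ih, Nat.add_sub_cancel,
      mul_left_comm, add_assoc, ih', Finset.sum_range_succ' _ (l + 1),
      Finset.sum_range_succ' _ (l + 1), Finset.mul_sum, ← add_assoc, ← Finset.sum_add_distrib]
    congr 1
    refine Finset.sum_congr rfl fun m _ => ?_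
    have e : (l + 1 : ℂ) * l.choose m = (l + 1).choose (m + 1) * (m + 1) := by
      exact_mod_cast Nat.add_one_mul_choose_eq l m
    rw [succ_descFactorial_succ_eq_add, Nat.add_sub_add_right, add_right_comm j 1 m, ← add_assoc]
    push_cast
    linear_combination p.descFactorial m * splineMoment s ξ (l - m) (j + m + 1) * e

lemma pow_mul_norm_splineMoment_self_le (hs : Even s) (ξ : ℝ) (l : ℕ) :
    |ξ| ^ s * ‖splineMoment s ξ l s‖ ≤
      ∑ m ∈ Finset.range (l + 1), l.choose m * (s ^ m * ‖splineMoment s ξ (l - m) m‖) := by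
  have h := congrArg norm (pow_mul_splineMoment hs ξ s l 0 le_rfl)
  rw [norm_mul, norm_pow, norm_neg, norm_mul, Complex.norm_I, mul_one, Complex.norm_real,
    Real.norm_eq_abs] at h
  refine h.trans_le ((norm_sum_le _ _).trans (Finset.sum_le_sum fun m _ => ?_))
  rw [norm_mul, Complex.norm_natCast, zero_add, ← mul_assoc]
  gcongr
  exact_mod_cast Nat.mul_le_mul_left _ (Nat.descFactorial_le_pow s m)

lemma norm_splineMoment_zero_le (s : ℕ) (ξ : ℝ) (l : ℕ) : ‖splineMoment s ξ l 0‖ ≤ 2 * s := by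
  have h (k : ℕ) : ‖monoExp ξ l (knot s k)‖ ≤ 1 := by
    rw [norm_monoExp]
    exact pow_le_one₀ (abs_nonneg _) (abs_le.2 (knot_mem s k))
  rw [splineMoment_zero, norm_neg]
  calc _ ≤ ∑ _k ∈ Finset.range s, (2 : ℝ) := by
        refine norm_sum_le_of_le _ fun k _ => ?_
        rw [norm_smul, norm_pow, norm_neg, norm_one, one_pow, one_mul]
        exact (norm_sub_le _ _).trans ((add_le_add (h _) (h _)).trans_eq one_add_one_eq_two)
    _ = 2 * s := by simp [mul_comm]

lemma integral_abs_pow (l : ℕ) : ∫ x in (-1 : ℝ)..1, |x| ^ l = 2 / (l + 1) := by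
  have hpos : ∫ x in (0 : ℝ)..1, |x| ^ l = 1 / (l + 1) := by
    rw [integral_congr (g := fun x => x ^ l), integral_pow]
    · simp
    · intro x hx
      rw [Set.uIcc_of_le zero_le_one] at hx
      simp only [abs_of_nonneg hx.1]
  have hneg : ∫ x in (-1 : ℝ)..0, |x| ^ l = 1 / (l + 1) := by
    have h := integral_comp_neg (a := 0) (b := 1) fun x : ℝ => |x| ^ l
    simp only [abs_neg, neg_zero] at h
    rw [← h, hpos]
  have hint (a b : ℝ) : IntervalIntegrable (fun x : ℝ => |x| ^ l) volume a b :=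
    Continuous.intervalIntegrable (by fun_prop) _ _
  rw [← integral_add_adjacent_intervals (hint (-1) 0) (hint 0 1), hneg, hpos]
  ring

lemma norm_splineMoment_succ_le {k : ℕ} {C : ℝ}
    (hC : ∀ x ∈ Set.Icc (-1 : ℝ) 1, |fspline s k x| ≤ C) (ξ : ℝ) (l : ℕ) :
    ‖splineMoment s ξ l (k + 1)‖ ≤ C * (2 / (l + 1)) := by
  rw [splineMoment_succ, ← integral_abs_pow, ← intervalIntegral.integral_const_mul]
  refine norm_integral_le_of_norm_le (by norm_num) (Filter.Eventually.of_forall fun x hx => ?_)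
    (Continuous.intervalIntegrable (by fun_prop) _ _)
  rw [norm_smul, norm_monoExp, Real.norm_eq_abs]
  exact mul_le_mul_of_nonneg_right (hC x ⟨hx.1.le, hx.2⟩) (by positivity)

/-- The constants in the decay `|ξ|^{-s}` of the first Fourier moments of the perfect spline:
twice the factors `s, 2s, 4s + 1, 9s - 2` of `cConst`. -/
noncomputable def momentConst (s : ℕ) : ℕ → ℝ
  | 0 => 2 * s
  | 1 => 4 * s
  | 2 => 8 * s + 2
  | _ => 18 * s - 4

lemma norm_splineMoment_self_le (hs : Even s) (hs6 : 6 ≤ s) {ξ : ℝ} (hξ : ξ ≠ 0) {l : ℕ}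
    (hl : l ≤ 3) : ‖splineMoment s ξ l s‖ ≤ momentConst s l / |ξ| ^ s := by
  have hs' : (6 : ℝ) ≤ s := by exact_mod_cast hs6
  have h₀ := norm_splineMoment_zero_le s ξ
  have h₁ (l : ℕ) : (s : ℝ) ^ 1 * ‖splineMoment s ξ l 1‖ ≤ 2 * s / (l + 1) := by
    calc _ ≤ (s : ℝ) ^ 1 * (1 * (2 / (l + 1))) := by
          gcongr; exact norm_splineMoment_succ_le (fun x _ => abs_fspline_zero_le s x) ξ l
      _ = _ := by ring
  have h₂ (l : ℕ) : (s : ℝ) ^ 2 * ‖splineMoment s ξ l 2‖ ≤ 3.26 * s / (l + 1) := by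
    calc _ ≤ (s : ℝ) ^ 2 * (1.63 / s * (2 / (l + 1))) := by
          gcongr; exact norm_splineMoment_succ_le (fun x => abs_fspline_one_le hs hs6) ξ l
      _ = _ := by field_simp; norm_num
  have h₃ (l : ℕ) : (s : ℝ) ^ 3 * ‖splineMoment s ξ l 3‖ ≤ 6 * s / (l + 1) := by
    calc _ ≤ (s : ℝ) ^ 3 * (3 / s ^ 2 * (2 / (l + 1))) := by
          gcongr; exact norm_splineMoment_succ_le (fun x => abs_fspline_two_le hs hs6) ξ l
      _ = _ := by field_simp; norm_num
  rw [le_div_iff₀' (by positivity)]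
  refine (pow_mul_norm_splineMoment_self_le hs ξ l).trans ?_
  interval_cases l <;>
    simp only [Finset.sum_range_succ, Finset.sum_range_zero, momentConst] <;> norm_num [Nat.choose]
  · exact h₀ 0
  · linarith [h₀ 1, h₁ 0]
  · linarith [h₀ 2, h₁ 1, h₂ 0]
  · linarith [h₀ 3, h₁ 2, h₂ 1, h₃ 0]

end FourierMoments

section PoissonSummation

open MeasureTheory FourierTransform

variable {s N : ℕ}

lemma sum_Icc_eq_tsum_fourierInv {H : ℝ → ℂ} (hH : Continuous H) {N : ℕ}
    (hzero : ∀ x : ℝ, (N : ℝ) + 1 ≤ |x| → H x = 0) (hsum : Summable fun n : ℤ => 𝓕⁻ H n) :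
    ∑ k ∈ Finset.Icc (-(N : ℤ)) N, H k = ∑' n : ℤ, 𝓕⁻ H n := by
  have hO : H =O[Filter.cocompact ℝ] fun x : ℝ => |x| ^ (-(2 : ℝ)) := by
    have : H =ᶠ[Filter.cocompact ℝ] fun _ => 0 := by
      filter_upwards [(isCompact_Icc (a := -((N : ℝ) + 1)) (b := N + 1)).compl_mem_cocompact]
        with x hx
      exact hzero x (not_lt.1 fun h => hx (abs_le.1 h.le))
    exact this.trans_isBigO (Asymptotics.isBigO_zero _ _)
  have hneg (n : ℤ) : 𝓕 H (n : ℝ) = 𝓕⁻ H ((-n : ℤ) : ℝ) := by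
    rw [Real.fourierInv_eq_fourier_neg, Int.cast_neg, neg_neg]
  have hpoisson := Real.tsum_eq_tsum_fourier_of_rpow_decay_of_summable hH one_lt_two hO
    (by simp only [hneg]; exact (Equiv.neg ℤ).summable_iff.2 hsum) 0
  simp only [zero_add, fourier_eval_zero, QuotientAddGroup.mk_zero, mul_one, hneg] at hpoisson
  have hrefl := hpoisson.trans ((Equiv.neg ℤ).tsum_eq fun n : ℤ => 𝓕⁻ H (n : ℝ))
  refine (tsum_eq_sum fun (k : ℤ) hk => hzero k ?_).symm.trans hrefl
  rw [Finset.mem_Icc, ← abs_le, not_le] at hk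
  exact_mod_cast hk

/-- The perfect B-spline of order `s - 1`, extended by zero from `[-1, 1]` to the line. -/
noncomputable def splineExt (s : ℕ) (x : ℝ) : ℝ := fspline s (s - 1) (max (-1) (min 1 x))

lemma continuous_splineExt (hs2 : 2 ≤ s) : Continuous (splineExt s) := by
  obtain ⟨k, rfl⟩ := Nat.exists_eq_add_of_le' hs2
  exact (continuous_fspline_succ (k + 2) k).comp (by fun_prop)

lemma splineExt_of_mem {x : ℝ} (hx : x ∈ Set.Icc (-1 : ℝ) 1) :
    splineExt s x = fspline s (s - 1) x := by
  rw [splineExt, min_eq_right hx.2, max_eq_right hx.1]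

lemma splineExt_of_one_le_abs (hs : Even s) (hs2 : 2 ≤ s) {x : ℝ} (hx : 1 ≤ |x|) :
    splineExt s x = 0 := by
  obtain ⟨k, rfl⟩ := Nat.exists_eq_add_of_le' hs2
  rcases le_abs.1 hx with h | h
  · rw [splineExt, min_eq_left h, max_eq_right (by norm_num)]
    exact fspline_succ_one_eq_zero hs (k := k) (by omega)
  · rw [splineExt, max_eq_left ((min_le_right _ _).trans (by linarith))]
    exact fspline_succ_neg_one _ _

lemma integral_splineExt_smul_monoExp (hs : Even s) (hs2 : 2 ≤ s) (ξ : ℝ) (l : ℕ) :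
    ∫ x, splineExt s x • monoExp ξ l x = splineMoment s ξ l s := by
  obtain ⟨k, rfl⟩ := Nat.exists_eq_add_of_le' hs2
  rw [splineMoment_succ, intervalIntegral.integral_of_le (by norm_num),
    ← setIntegral_eq_integral_of_forall_compl_eq_zero (s := Set.Ioc (-1 : ℝ) 1)]
  · refine setIntegral_congr_fun measurableSet_Ioc fun x hx => ?_
    simp only [splineExt_of_mem (Set.Ioc_subset_Icc_self hx), Nat.add_succ_sub_one]
  · intro x hx
    rw [splineExt_of_one_le_abs hs hs2 (not_lt.1 fun h => hx ?_), zero_smul]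
    exact ⟨(abs_lt.1 h).1, (abs_lt.1 h).2.le⟩

lemma fourierInv_splineExt_smul_monoExp (hs : Even s) (hs2 : 2 ≤ s) {M : ℝ} (hM : 0 < M) (t : ℝ)
    (l : ℕ) (y : ℝ) :
    𝓕⁻ (fun x : ℝ => splineExt s (x / M) • monoExp (M * t) l (x / M)) y =
      M * splineMoment s (M * (t + 2 * π * y)) l s := by
  have hscale := Measure.integral_comp_div
    (fun x => splineExt s x • monoExp (M * (t + 2 * π * y)) l x) M
  rw [abs_of_pos hM, Complex.real_smul, integral_splineExt_smul_monoExp hs hs2] at hscale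
  rw [Real.fourierInv_eq', ← hscale]
  congr 1 with x
  rw [smul_comm]
  congr 1
  rw [monoExp, monoExp, smul_eq_mul, mul_left_comm, ← Complex.exp_add]
  congr 2
  have hM' : (M : ℂ) ≠ 0 := by exact_mod_cast hM.ne'
  simp only [RCLike.inner_apply, conj_trivial]
  push_cast
  field_simp
  ring

lemma sum_gtilde_smul_monoExp (hs : Even s) (hs2 : 2 ≤ s) (t : ℝ) (l : ℕ)
    (hsum : Summable fun n : ℤ => splineMoment s ((N + 1) * (t + 2 * π * n)) l s) :
    ∑ k ∈ Finset.Icc (-(N : ℤ)) N,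
        gtilde s (k / (2 * ((N : ℝ) + 1))) • monoExp ((N + 1) * t) l (k / (N + 1)) =
      (N + 1 : ℝ) * ∑' n : ℤ, splineMoment s ((N + 1) * (t + 2 * π * n)) l s := by
  have hM : (0 : ℝ) < N + 1 := by positivity
  have hF (y : ℝ) := fourierInv_splineExt_smul_monoExp hs hs2 hM t l y
  have hcont : Continuous fun x : ℝ =>
      splineExt s (x / (N + 1)) • monoExp ((N + 1) * t) l (x / (N + 1)) :=
    ((continuous_splineExt hs2).comp (continuous_id.div_const _)).smul
      ((continuous_monoExp _ _).comp (continuous_id.div_const _))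
  have hpoisson := sum_Icc_eq_tsum_fourierInv (N := N) hcont
    (fun x hx => by
      rw [splineExt_of_one_le_abs hs hs2 (by rwa [abs_div, abs_of_pos hM, one_le_div hM]),
        zero_smul])
    (by simpa only [hF] using hsum.mul_left _)
  simp only [hF, tsum_mul_left] at hpoisson
  rw [← hpoisson]
  refine Finset.sum_congr rfl fun k hk => ?_
  have hk : |(k : ℝ)| ≤ N := by exact_mod_cast abs_le.2 (Finset.mem_Icc.1 hk)
  rw [splineExt_of_mem (abs_le.1 _), gtilde, show 2 * (k / (2 * ((N : ℝ) + 1))) = k / (N + 1) by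
    field_simp]
  rw [abs_div, abs_of_pos hM, div_le_one hM]
  linarith

lemma momentConst_nonneg (hs : 1 ≤ s) (l : ℕ) : 0 ≤ momentConst s l := by
  have hs' : (1 : ℝ) ≤ s := by exact_mod_cast hs
  unfold momentConst
  split <;> linarith

end PoissonSummation

section SplineNorm

variable {s N : ℕ}

lemma hasSum_int_inv_sq : HasSum (fun n : ℤ => 1 / (n : ℝ) ^ 2) (π ^ 2 / 3) := by
  have hsucc : HasSum (fun n : ℕ => 1 / ((n + 1 : ℕ) : ℝ) ^ 2) (π ^ 2 / 6) := by
    simpa using (hasSum_nat_add_iff' 1).2 hasSum_zeta_two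
  convert HasSum.of_nat_of_neg_add_one (f := fun n : ℤ => 1 / (n : ℝ) ^ 2)
    (by simpa using hasSum_zeta_two) (hsucc.congr_fun fun n => by push_cast; ring) using 1
  ring

lemma norm_tsum_sub_le_of_inv_sq {f : ℤ → ℂ} {D : ℝ} (hf : ∀ n ≠ 0, ‖f n‖ ≤ D * (1 / (n : ℝ) ^ 2)) :
    Summable f ∧ ‖∑' n, f n - f 0‖ ≤ D * (π ^ 2 / 3) := by
  set g : ℤ → ℂ := fun n => f n - if n = 0 then f 0 else 0 with hg
  have hgD (n : ℤ) : ‖g n‖ ≤ D * (1 / (n : ℝ) ^ 2) := by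
    rcases eq_or_ne n 0 with rfl | hn
    · simp [hg]
    · simpa [hg, hn] using hf n hn
  have hD := hasSum_int_inv_sq.mul_left D
  have hsum : HasSum f (∑' n, g n + f 0) :=
    ((Summable.of_norm_bounded hD.summable hgD).hasSum.add (hasSum_ite_eq 0 (f 0))).congr_fun
      fun n => by simp [hg]
  refine ⟨hsum.summable, ?_⟩
  rw [hsum.tsum_eq, add_sub_cancel_right]
  exact tsum_of_norm_bounded hD hgD

lemma splineMoment_zero_zero_self (hs : s ≠ 0) : splineMoment s 0 0 s = fspline s s 1 := by
  obtain ⟨k, rfl⟩ := Nat.exists_eq_add_one_of_ne_zero hs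
  rw [splineMoment_succ, fspline_succ]
  simp [monoExp, ← intervalIntegral.integral_ofReal]

lemma ofReal_gnorm (s N : ℕ) : (gnorm s N : ℂ) = ∑ k ∈ Finset.Icc (-(N : ℤ)) N,
    gtilde s (k / (2 * ((N : ℝ) + 1))) • monoExp ((N + 1) * 0) 0 (k / (N + 1)) := by
  simp [gnorm, monoExp]

lemma norm_splineMoment_two_pi_mul_le (hs : Even s) (hs6 : 6 ≤ s) {M : ℝ} (hM : 0 < M) {n : ℤ}
    (hn : n ≠ 0) : ‖splineMoment s (M * (0 + 2 * π * n)) 0 s‖ ≤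
      2 * s / (2 * π * M) ^ s * (1 / (n : ℝ) ^ 2) := by
  have : (n : ℝ) ≠ 0 := by exact_mod_cast hn
  have hn1 : (1 : ℝ) ≤ |(n : ℝ)| := by exact_mod_cast Int.one_le_abs hn
  have hξ : M * (0 + 2 * π * n) = 2 * π * M * n := by ring
  rw [hξ]
  refine (norm_splineMoment_self_le hs hs6 (by positivity) (Nat.zero_le 3)).trans ?_
  rw [div_mul_div_comm, mul_one, momentConst, abs_mul, mul_pow, abs_of_pos (by positivity),
    ← sq_abs (n : ℝ)]
  gcongr
  omega

lemma factorial_div_pow_le (hs6 : 6 ≤ s) {M : ℝ} (hM : 2 * (s : ℝ) ≤ M) :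
    (s.factorial : ℝ) / (π * M) ^ s ≤ 1 / 6 ^ 6 := by
  have : 0 < s := by omega
  calc (s.factorial : ℝ) / (π * M) ^ s ≤ (s : ℝ) ^ s / (3 * (2 * s)) ^ s := by
        gcongr
        · exact_mod_cast Nat.factorial_le_pow s
        · exact Real.pi_gt_three.le
    _ = 1 / 6 ^ s := by
        rw [show (3 * (2 * s) : ℝ) = 6 * s by ring, mul_pow]
        field_simp
    _ ≤ 1 / 6 ^ 6 := by gcongr; norm_num

lemma mul_fspline_le_gnorm (hs : Even s) (hs6 : 6 ≤ s) (hN : 2 * s ≤ N) :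
    0.999 * ((N + 1) * fspline s s 1) ≤ gnorm s N := by
  have hM : (0 : ℝ) < N + 1 := by positivity
  obtain ⟨hsum, htail⟩ := norm_tsum_sub_le_of_inv_sq fun n hn =>
    norm_splineMoment_two_pi_mul_le hs hs6 hM (n := n) hn
  have hself := factorial_mul_fspline_self_one hs (by omega)
  have hpos : 0 < fspline s s 1 := by
    refine pos_of_mul_pos_right (a := ((s - 1).factorial : ℝ)) ?_ (by positivity)
    rw [hself]; positivity
  have hgnorm : gnorm s N =
      (N + 1) * (∑' n : ℤ, splineMoment s ((N + 1) * (0 + 2 * π * n)) 0 s).re := by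
    rw [← Complex.re_ofReal_mul, ← sum_gtilde_smul_monoExp hs (by omega) 0 0 hsum,
      ← ofReal_gnorm, Complex.ofReal_re]
  have hD : 2 * s / (2 * π * (N + 1)) ^ s =
      s.factorial / (π * (N + 1)) ^ s * fspline s s 1 / 2 := by
    obtain ⟨k, rfl⟩ := Nat.exists_eq_add_of_le' (by omega : 1 ≤ s)
    rw [Nat.add_sub_cancel] at hself
    rw [Nat.factorial_succ, Nat.cast_mul, div_mul_eq_mul_div,
      mul_assoc (_ : ℝ) (k.factorial : ℝ), hself, mul_assoc 2 π, mul_pow 2, pow_succ 2, one_div,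
      inv_pow]
    field_simp
  have hsmall : 2 * s / (2 * π * (N + 1)) ^ s * (π ^ 2 / 3) ≤ 0.001 * fspline s s 1 := by
    have hπ : π ^ 2 ≤ 10 := by nlinarith [Real.pi_lt_d2, Real.pi_pos]
    have hfac := factorial_div_pow_le hs6 (M := N + 1) (by
      have : (2 * s : ℝ) ≤ N := by exact_mod_cast hN
      linarith)
    calc _ ≤ 1 / 6 ^ 6 * fspline s s 1 / 2 * (10 / 3) := by rw [hD]; gcongr
      _ ≤ _ := by linarith
  have hzero : splineMoment s ((N + 1) * (0 + 2 * π * (0 : ℤ))) 0 s = fspline s s 1 := by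
    simpa using splineMoment_zero_zero_self (s := s) (by omega)
  have hre := (abs_le.1 ((Complex.abs_re_le_norm _).trans htail)).1
  rw [hzero, Complex.sub_re, Complex.ofReal_re] at hre
  rw [hgnorm, mul_left_comm]
  gcongr
  linarith

end SplineNorm

section KernelDecay

variable {s N : ℕ}

lemma norm_tsum_int_le {f : ℤ → ℂ} {b : ℕ → ℝ} {B : ℝ} (hb : HasSum b B)
    (hf : ∀ n : ℕ, ‖f n‖ ≤ b n) (hf' : ∀ n : ℕ, ‖f (-(n + 1))‖ ≤ b n) :
    Summable f ∧ ‖∑' n, f n‖ ≤ 2 * B := by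
  have hsum := HasSum.of_nat_of_neg_add_one (Summable.of_norm_bounded hb.summable hf).hasSum
    (Summable.of_norm_bounded hb.summable hf').hasSum
  refine ⟨hsum.summable, ?_⟩
  rw [hsum.tsum_eq, two_mul]
  exact (norm_add_le _ _).trans
    (add_le_add (tsum_of_norm_bounded hb hf) (tsum_of_norm_bounded hb hf'))

lemma one_div_odd_pow_le (hs6 : 6 ≤ s) (n : ℕ) :
    1 / (2 * (n : ℝ) + 1) ^ s ≤ (if n = 0 then (1 : ℝ) else 0) + 1 / 324 * (1 / (n : ℝ) ^ 2) := by
  rcases Nat.eq_zero_or_pos n with rfl | hn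
  · simp
  · have hn' : (1 : ℝ) ≤ n := by exact_mod_cast hn
    rw [if_neg hn.ne', zero_add, one_div_mul_one_div_rev]
    refine one_div_le_one_div_of_le (by positivity) ?_
    calc (n : ℝ) ^ 2 * 324 ≤ (2 * (n : ℝ) + 1) ^ 2 * 3 ^ 4 := by nlinarith
      _ ≤ (2 * (n : ℝ) + 1) ^ 2 * (2 * (n : ℝ) + 1) ^ 4 := by gcongr; linarith
      _ = (2 * (n : ℝ) + 1) ^ 6 := by ring
      _ ≤ _ := pow_le_pow_right₀ (by linarith) hs6

lemma norm_tsum_splineMoment_le (hs : Even s) (hs6 : 6 ≤ s) {M t : ℝ} (hM : 0 < M)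
    (ht : 0 < t) (htπ : t ≤ π) {l : ℕ} (hl : l ≤ 3) :
    (Summable fun n : ℤ => splineMoment s (M * (t + 2 * π * n)) l s) ∧
      ‖∑' n : ℤ, splineMoment s (M * (t + 2 * π * n)) l s‖ ≤
        2.0104 * (momentConst s l / (M * t) ^ s) := by
  set D := momentConst s l / (M * t) ^ s
  have hconst := momentConst_nonneg (s := s) (by omega) l
  have hD : 0 ≤ D := by positivity
  have hterm (n : ℕ) {u : ℝ} (hu : (2 * n + 1) * t ≤ |u|) : ‖splineMoment s (M * u) l s‖ ≤
      D * ((if n = 0 then (1 : ℝ) else 0) + 1 / 324 * (1 / (n : ℝ) ^ 2)) := by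
    have hu0 : 0 < |u| := lt_of_lt_of_le (by positivity) hu
    calc ‖splineMoment s (M * u) l s‖ ≤ momentConst s l / |M * u| ^ s :=
          norm_splineMoment_self_le hs hs6 (mul_ne_zero hM.ne' (abs_pos.1 hu0)) hl
      _ ≤ momentConst s l / (M * ((2 * n + 1) * t)) ^ s := by
          rw [abs_mul, abs_of_pos hM]; gcongr
      _ = D * (1 / (2 * n + 1) ^ s) := by
          rw [div_mul_div_comm, mul_one, ← mul_pow]; ring_nf
      _ ≤ _ := mul_le_mul_of_nonneg_left (one_div_odd_pow_le hs6 n) hD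
  have hnonneg (n : ℕ) : (2 * (n : ℝ) + 1) * t ≤ |t + 2 * π * (n : ℤ)| := by
    refine le_trans ?_ (le_abs_self _)
    push_cast
    nlinarith [n.cast_nonneg (α := ℝ)]
  have hneg (n : ℕ) : (2 * (n : ℝ) + 1) * t ≤ |t + 2 * π * (-(n + 1) : ℤ)| := by
    refine le_trans ?_ (neg_le_abs _)
    push_cast
    nlinarith [n.cast_nonneg (α := ℝ)]
  obtain ⟨hsum, hle⟩ := norm_tsum_int_le
    (f := fun n : ℤ => splineMoment s (M * (t + 2 * π * n)) l s)
    (((hasSum_ite_eq 0 (1 : ℝ)).add (hasSum_zeta_two.mul_left (1 / 324))).mul_left D)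
    (fun n => hterm n (hnonneg n)) (fun n => hterm n (hneg n))
  refine ⟨hsum, hle.trans ?_⟩
  have hπ : π ^ 2 ≤ 10 := by nlinarith [Real.pi_lt_d2, Real.pi_pos]
  nlinarith

lemma iteratedDeriv_sigmaT (s N l : ℕ) : iteratedDeriv l (sigmaT s N) = fun t : ℝ =>
    ((1 / (gnorm s N : ℂ)) * ∑ k ∈ Finset.Icc (-(N : ℤ)) N,
      (gtilde s (k / (2 * ((N : ℝ) + 1))) : ℂ) *
        ((k * Complex.I) ^ l * Complex.exp (k * t * Complex.I))).re := by
  induction l with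
  | zero => funext t; simp [sigmaT]
  | succ l ih =>
    funext t
    rw [iteratedDeriv_succ, ih]
    refine HasDerivAt.deriv ?_
    have hid : HasDerivAt (fun x : ℝ => (x : ℂ)) 1 t := (hasDerivAt_id t).ofReal_comp
    have hsum := (HasDerivAt.fun_sum (u := Finset.Icc (-(N : ℤ)) N) fun k _ =>
      ((((hid.const_mul (k : ℂ)).mul_const Complex.I).cexp).const_mul
        ((k * Complex.I) ^ l)).const_mul
        (gtilde s (k / (2 * ((N : ℝ) + 1))) : ℂ)).const_mul (1 / (gnorm s N : ℂ))
    refine ((Complex.reCLM.hasFDerivAt (x := _)).comp_hasDerivAt t hsum).congr_deriv ?_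
    rw [Complex.reCLM_apply]
    congr 2
    refine Finset.sum_congr rfl fun k _ => ?_
    ring

lemma iteratedDeriv_sigmaT_eq_sum_monoExp (s N l : ℕ) (t : ℝ) : iteratedDeriv l (sigmaT s N) t =
    ((1 / (gnorm s N : ℂ)) * (((N + 1 : ℝ) * Complex.I) ^ l * ∑ k ∈ Finset.Icc (-(N : ℤ)) N,
      gtilde s (k / (2 * ((N : ℝ) + 1))) • monoExp ((N + 1) * t) l (k / (N + 1)))).re := by
  have hM : (N : ℂ) + 1 ≠ 0 := by exact_mod_cast N.succ_ne_zero
  rw [iteratedDeriv_sigmaT, Finset.mul_sum _ _ (((N + 1 : ℝ) * Complex.I) ^ l)]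
  refine congrArg (fun z : ℂ => (1 / (gnorm s N : ℂ) * z).re) (Finset.sum_congr rfl fun k _ => ?_)
  rw [Complex.real_smul, mul_left_comm (_ ^ l), monoExp, ← mul_assoc (_ ^ l), ← mul_pow]
  push_cast
  congr 3 <;> field_simp

lemma cConst_eq_momentConst {l : ℕ} (hl : l ≤ 3) (s : ℕ) :
    cConst l s = 0.51 * (momentConst s l * (s - 1).factorial * 2 ^ s) := by
  interval_cases l <;> simp only [cConst, momentConst] <;> ring

theorem abs_iteratedDeriv_sigmaT_le (hs : Even s) (hs6 : 6 ≤ s) (hN : 2 * s ≤ N) {t : ℝ}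
    (ht : 0 < t) (htπ : t ≤ π) {l : ℕ} (hl : l ≤ 3) :
    |iteratedDeriv l (sigmaT s N) t| ≤ cConst l s * ((N + 1) ^ l / ((N + 1) * t) ^ s) := by
  have hM : (0 : ℝ) < N + 1 := by positivity
  obtain ⟨hsum, hbound⟩ := norm_tsum_splineMoment_le hs hs6 hM ht htπ hl
  have hconst := momentConst_nonneg (s := s) (by omega) l
  have hself : fspline s s 1 = 4 / (2 ^ s * (s - 1).factorial) := by
    have h := factorial_mul_fspline_self_one hs (by omega)
    have hpow : (2 : ℝ) ^ s = 2 * 2 ^ (s - 1) := by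
      rw [← pow_succ', Nat.sub_add_cancel (by omega)]
    rw [one_div, inv_pow] at h
    rw [eq_div_iff (by positivity), hpow, mul_comm, mul_assoc, h]
    field_simp
    norm_num
  have hG : 0 < (N + 1) * fspline s s 1 := by rw [hself]; positivity
  have hnorm := mul_fspline_le_gnorm hs hs6 hN
  rw [iteratedDeriv_sigmaT_eq_sum_monoExp, sum_gtilde_smul_monoExp hs (by omega) t l hsum,
    cConst_eq_momentConst hl]
  refine (Complex.abs_re_le_norm _).trans ?_
  simp only [norm_mul, norm_pow, norm_div, norm_one, Complex.norm_real, Complex.norm_I, mul_one,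
    Real.norm_of_nonneg hM.le, Real.norm_of_nonneg (show 0 ≤ gnorm s N by linarith)]
  calc _ ≤ 1 / (0.999 * ((N + 1) * fspline s s 1)) *
        ((N + 1) ^ l * ((N + 1) * (2.0104 * (momentConst s l / ((N + 1) * t) ^ s)))) := by
        gcongr
    _ = 2.0104 / (4 * 0.999) * (momentConst s l * (s - 1).factorial * 2 ^ s) *
          ((N + 1) ^ l / ((N + 1) * t) ^ s) := by
        rw [hself]
        field_simp
    _ ≤ _ := by
        gcongr
        norm_num

end KernelDecay

section Rotations

namespace IsSO3

variable {z w : Mat3}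

lemma mul_transpose (hz : IsSO3 z) : z * z.transpose = 1 := mul_eq_one_comm.1 hz.1

lemma inv_eq_transpose (hz : IsSO3 z) : z⁻¹ = z.transpose := Matrix.inv_eq_left_inv hz.1

lemma transpose (hz : IsSO3 z) : IsSO3 z.transpose :=
  ⟨by rw [Matrix.transpose_transpose, hz.mul_transpose], by rw [Matrix.det_transpose, hz.2]⟩

lemma mul (hz : IsSO3 z) (hw : IsSO3 w) : IsSO3 (z * w) := by
  refine ⟨?_, by rw [Matrix.det_mul, hz.2, hw.2, one_mul]⟩
  rw [Matrix.transpose_mul, Matrix.mul_assoc, ← Matrix.mul_assoc z.transpose, hz.1,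
    Matrix.one_mul, hw.1]

lemma adjugate_eq_transpose (hz : IsSO3 z) : z.adjugate = z.transpose := by
  rw [← hz.inv_eq_transpose, Matrix.inv_def, hz.2, Ring.inverse_one, one_smul]

lemma sum_sq_column (hz : IsSO3 z) (i : Fin 3) : z 0 i ^ 2 + z 1 i ^ 2 + z 2 i ^ 2 = 1 := by
  rw [← Matrix.one_apply_eq (α := ℝ) i, ← hz.1, Matrix.mul_apply, Fin.sum_univ_three]
  simp only [Matrix.transpose_apply, sq]

lemma sum_mul_column (hz : IsSO3 z) {i j : Fin 3} (hij : i ≠ j) :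
    z 0 i * z 0 j + z 1 i * z 1 j + z 2 i * z 2 j = 0 := by
  rw [← Matrix.one_apply_ne (α := ℝ) hij, ← hz.1, Matrix.mul_apply, Fin.sum_univ_three]
  rfl

lemma apply_eq_cofactor (hz : IsSO3 z) :
    (z 0 0 = z 1 1 * z 2 2 - z 1 2 * z 2 1 ∧ z 0 1 = z 1 2 * z 2 0 - z 1 0 * z 2 2 ∧
      z 0 2 = z 1 0 * z 2 1 - z 1 1 * z 2 0) ∧
    (z 1 0 = z 0 2 * z 2 1 - z 0 1 * z 2 2 ∧ z 1 1 = z 0 0 * z 2 2 - z 0 2 * z 2 0 ∧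
      z 1 2 = z 0 1 * z 2 0 - z 0 0 * z 2 1) ∧
    (z 2 0 = z 0 1 * z 1 2 - z 0 2 * z 1 1 ∧ z 2 1 = z 0 2 * z 1 0 - z 0 0 * z 1 2 ∧
      z 2 2 = z 0 0 * z 1 1 - z 0 1 * z 1 0) := by
  have h := fun i j => congrFun (congrFun hz.adjugate_eq_transpose j) i
  simp only [Matrix.adjugate_fin_three, Matrix.transpose_apply] at h
  refine ⟨⟨?_, ?_, ?_⟩, ⟨?_, ?_, ?_⟩, ⟨?_, ?_, ?_⟩⟩ <;> rw [← h] <;> simp [sub_eq_neg_add]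

end IsSO3

/-- The vector `a` with `z - zᵀ = [a]ₓ`; for a rotation it is `2 sin ω` times the axis. -/
def axialVec (z : Mat3) : Fin 3 → ℝ := ![z 2 1 - z 1 2, z 0 2 - z 2 0, z 1 0 - z 0 1]

/-- The matrix `z + zᵀ + (1 - tr z)`; for a rotation with axis `ν` it is `(3 - tr z) ν νᵀ`. -/
def axisProj (z : Mat3) : Mat3 := z + z.transpose + (1 - z.trace) • (1 : Mat3)

lemma trace_axisProj (z : Mat3) : (axisProj z).trace = 3 - z.trace := by
  simp only [axisProj, Matrix.trace_add, Matrix.trace_transpose, Matrix.trace_smul,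
    Matrix.trace_one, Fintype.card_fin, smul_eq_mul]
  push_cast
  ring

lemma IsSO3.axialVec_mul_axialVec {z : Mat3} (hz : IsSO3 z) (i j : Fin 3) :
    axialVec z i * axialVec z j = (1 + z.trace) * axisProj z i j := by
  obtain ⟨⟨h00, h01, h02⟩, ⟨h10, h11, h12⟩, ⟨h20, h21, h22⟩⟩ := hz.apply_eq_cofactor
  have hc := hz.sum_sq_column
  have hr := hz.transpose.sum_sq_column
  have hco : ∀ i j, i ≠ j → _ := fun i j => hz.sum_mul_column (i := i) (j := j)
  have hro : ∀ i j, i ≠ j → _ := fun i j => hz.transpose.sum_mul_column (i := i) (j := j)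
  simp only [Matrix.transpose_apply] at hr hro
  rw [axisProj, Matrix.trace_fin_three]
  fin_cases i <;> fin_cases j <;> simp [axialVec] <;>
    linarith [hc 0, hc 1, hc 2, hr 0, hr 1, hr 2, hco 0 1 (by decide), hco 0 2 (by decide),
      hco 1 2 (by decide), hro 0 1 (by decide), hro 0 2 (by decide), hro 1 2 (by decide)]

lemma IsSO3.axisProj_minor {z : Mat3} (hz : IsSO3 z) (i j k : Fin 3) :
    axisProj z i i * axisProj z j k = axisProj z i j * axisProj z i k := by
  obtain ⟨⟨h00, h01, h02⟩, ⟨h10, h11, h12⟩, ⟨h20, h21, h22⟩⟩ := hz.apply_eq_cofactor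
  have hc := hz.sum_sq_column
  have hr := hz.transpose.sum_sq_column
  have hco : ∀ i j, i ≠ j → _ := fun i j => hz.sum_mul_column (i := i) (j := j)
  have hro : ∀ i j, i ≠ j → _ := fun i j => hz.transpose.sum_mul_column (i := i) (j := j)
  simp only [Matrix.transpose_apply] at hr hro
  rw [axisProj, Matrix.trace_fin_three]
  fin_cases i <;> fin_cases j <;> fin_cases k <;> simp <;>
    linarith [hc 0, hc 1, hc 2, hr 0, hr 1, hr 2, hco 0 1 (by decide), hco 0 2 (by decide),
      hco 1 2 (by decide), hro 0 1 (by decide), hro 0 2 (by decide), hro 1 2 (by decide)]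

lemma exists_eq_mul_of_minors {P : Mat3} (htr : P.trace = 1)
    (hP : ∀ i j k, P i i * P j k = P i j * P i k) :
    ∃ ν : Fin 3 → ℝ, ∀ j k, P j k = ν j * ν k := by
  obtain ⟨i, hi⟩ : ∃ i, 0 < P i i := by
    by_contra! h
    linarith [Finset.sum_nonpos fun i (_ : i ∈ Finset.univ) => h i, htr.ge,
      show P.trace = ∑ i, P i i from rfl]
  refine ⟨fun j => P i j / √(P i i), fun j k => ?_⟩
  rw [div_mul_div_comm, Real.mul_self_sqrt hi.le, ← hP i j k]
  field_simp

lemma eq_or_eq_neg_of_mul_eq {ι R : Type*} [CommRing R] [IsDomain R] {u v : ι → R}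
    (h : ∀ i j, u i * u j = v i * v j) : u = v ∨ u = -v := by
  by_cases hv : ∀ i, v i = 0
  · exact .inl (funext fun i => by rw [hv i, ← mul_self_eq_zero, h, hv, zero_mul])
  · obtain ⟨i, hi⟩ := not_forall.1 hv
    refine (mul_self_eq_mul_self_iff.1 (h i i)).imp (fun hu => funext fun j => ?_)
      fun hu => funext fun j => mul_left_cancel₀ hi ?_
    · exact mul_left_cancel₀ hi (by rw [← h, hu])
    · rw [Pi.neg_apply, mul_neg, ← h, hu, neg_mul, neg_neg]

lemma IsSO3.trace_le_three {z : Mat3} (hz : IsSO3 z) : z.trace ≤ 3 := by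
  have h := hz.sum_sq_column
  rw [Matrix.trace_fin_three]
  nlinarith [h 0, h 1, h 2, sq_nonneg (z 0 0 - 1), sq_nonneg (z 1 1 - 1), sq_nonneg (z 2 2 - 1),
    sq_nonneg (z 1 0), sq_nonneg (z 2 0), sq_nonneg (z 0 1), sq_nonneg (z 2 1),
    sq_nonneg (z 0 2), sq_nonneg (z 1 2)]

lemma IsSO3.neg_one_le_trace {z : Mat3} (hz : IsSO3 z) : -1 ≤ z.trace := by
  have hprod : 0 ≤ (1 + z.trace) * (3 - z.trace) := by
    rw [← trace_axisProj, Matrix.trace.eq_def (axisProj z), Finset.mul_sum]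
    refine Finset.sum_nonneg fun i _ => ?_
    rw [Matrix.diag_apply, ← hz.axialVec_mul_axialVec]
    exact mul_self_nonneg _
  by_contra! hlt
  nlinarith

lemma IsSO3.cos_rotAngle {z : Mat3} (hz : IsSO3 z) :
    Real.cos (rotAngle z) = (z.trace - 1) / 2 :=
  Real.cos_arccos (by linarith [hz.neg_one_le_trace]) (by linarith [hz.trace_le_three])

/-- The matrix `[ν]ₓ` of the cross product `v ↦ ν × v`. -/
def crossMat (ν : Fin 3 → ℝ) : Mat3 := !![0, -ν 2, ν 1; ν 2, 0, -ν 0; -ν 1, ν 0, 0]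

lemma crossMat_smul (r : ℝ) (ν : Fin 3 → ℝ) : crossMat (r • ν) = r • crossMat ν := by
  ext i j
  fin_cases i <;> fin_cases j <;> simp [crossMat]

/-- Rodrigues' formula for the rotation about the axis `ν` through the angle with cosine `C` and
sine `S`. -/
def axisRotation (C S : ℝ) (ν : Fin 3 → ℝ) : Mat3 :=
  C • 1 + (1 - C) • Matrix.vecMulVec ν ν + S • crossMat ν

lemma half_smul_axisProj_add (z : Mat3) :
    (1 / 2 : ℝ) • (axisProj z + (z.trace - 1) • 1 + crossMat (axialVec z)) = z := by
  ext i j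
  fin_cases i <;> fin_cases j <;> simp [axisProj, crossMat, axialVec] <;> ring

lemma IsSO3.exists_axis {z : Mat3} (hz : IsSO3 z) (hω : 0 < rotAngle z) :
    ∃ ν : Fin 3 → ℝ, ∑ i, ν i ^ 2 = 1 ∧
      z = axisRotation (Real.cos (rotAngle z)) (Real.sin (rotAngle z)) ν := by
  set C := Real.cos (rotAngle z) with hC
  set S := Real.sin (rotAngle z)
  have htr : z.trace = 1 + 2 * C := by linarith [hz.cos_rotAngle]
  have hSC : S ^ 2 + C ^ 2 = 1 := Real.sin_sq_add_cos_sq _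
  have hC1 : C < 1 := by
    rw [hC, ← Real.cos_zero]
    exact Real.cos_lt_cos_of_nonneg_of_le_pi le_rfl (Real.arccos_le_pi _) hω
  have hne : 3 - z.trace ≠ 0 := by linarith
  obtain ⟨ν, hν⟩ := exists_eq_mul_of_minors (P := (3 - z.trace)⁻¹ • axisProj z)
    (by rw [Matrix.trace_smul, trace_axisProj, smul_eq_mul, inv_mul_cancel₀ hne])
    fun i j k => by
      simp only [Matrix.smul_apply, smul_eq_mul]
      linear_combination (3 - z.trace)⁻¹ ^ 2 * hz.axisProj_minor i j k
  have hproj : axisProj z = (3 - z.trace) • Matrix.vecMulVec ν ν := by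
    ext i j
    rw [Matrix.smul_apply, Matrix.vecMulVec_apply, ← hν, Matrix.smul_apply, smul_smul,
      mul_inv_cancel₀ hne, one_smul]
  have hunit : ∑ i, ν i ^ 2 = 1 := by
    have h := congrArg Matrix.trace hproj
    rw [trace_axisProj, Matrix.trace_smul, Matrix.trace_vecMulVec, smul_eq_mul,
      eq_comm, mul_eq_left₀ hne] at h
    simpa only [dotProduct, ← sq] using h
  have haxial : axialVec z = (2 * S) • ν ∨ axialVec z = -((2 * S) • ν) :=
    eq_or_eq_neg_of_mul_eq fun i j => by
      rw [hz.axialVec_mul_axialVec, hproj, htr]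
      simp only [Matrix.smul_apply, Matrix.vecMulVec_apply, Pi.smul_apply, smul_eq_mul]
      linear_combination (-4 * ν i * ν j) * hSC
  rcases haxial with h | h
  · refine ⟨ν, hunit, ?_⟩
    rw [← half_smul_axisProj_add z, hproj, h, crossMat_smul, htr, axisRotation]
    module
  · refine ⟨-ν, by simpa only [Pi.neg_apply, neg_sq] using hunit, ?_⟩
    rw [← half_smul_axisProj_add z, hproj, h, ← smul_neg, crossMat_smul, htr, axisRotation,
      Matrix.neg_vecMulVec, Matrix.vecMulVec_neg, neg_neg]
    module

lemma transpose_Lgen (i : Fin 3) : (Lgen i).transpose = -Lgen i := by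
  fin_cases i <;> ext a b <;> fin_cases a <;> fin_cases b <;> simp [Lgen]

lemma isSO3_exp_of_transpose_eq_neg {A : Mat3} (hA : A.transpose = -A) :
    IsSO3 (NormedSpace.exp A) := by
  have horth : ∀ t : ℝ, (NormedSpace.exp (t • A)).transpose * NormedSpace.exp (t • A) = 1 := by
    intro t
    rw [← Matrix.exp_transpose, Matrix.transpose_smul, hA, smul_neg, Matrix.exp_neg]
    exact Matrix.nonsing_inv_mul _ ((Matrix.isUnit_iff_isUnit_det _).1 (Matrix.isUnit_exp _))
  refine ⟨by simpa only [one_smul] using horth 1, ?_⟩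
  have hhalf := congrArg Matrix.det (horth (1 / 2))
  rw [Matrix.det_mul, Matrix.det_transpose, Matrix.det_one, ← Matrix.det_mul] at hhalf
  rw [← hhalf, ← Matrix.exp_add_of_commute _ _ (Commute.refl _), ← add_smul]
  norm_num

end Rotations

section ZonalFunctions

open scoped Matrix.Norms.Operator in
lemma hasDerivAt_trace_mul_exp_mul (L A B : Mat3) :
    HasDerivAt (fun t : ℝ => (A * NormedSpace.exp (t • L) * B).trace) (A * L * B).trace 0 := by
  have hexp := hasDerivAt_exp_smul_const (𝕂 := ℝ) L 0
  rw [zero_smul, NormedSpace.exp_zero, one_mul] at hexp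
  exact ((Matrix.traceLinearMap (Fin 3) ℝ ℝ).toContinuousLinearMap.hasFDerivAt).comp_hasDerivAt
    (0 : ℝ) ((hexp.const_mul A).mul_const B)

/-- Half the trace of `yᵀ x A`: the derivatives of the cosine `(tr (yᵀ x) - 1) / 2` of the rotation
angle along the generators have this form, with `A` a product of generators. -/
noncomputable def halfTrace (A x y : Mat3) : ℝ := (y.transpose * x * A).trace / 2

/-- The kernel `P (cos ω(yᵀ x))`, extended polynomially from rotations to all matrices so that it
can be differentiated as a function on the ambient space. -/
noncomputable def zonal (P : Polynomial ℝ) (x y : Mat3) : ℝ :=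
  P.eval (((y.transpose * x).trace - 1) / 2)

variable (P : Polynomial ℝ) (i j k : Fin 3) (x y : Mat3)

lemma mul_exp_zero_smul (L : Mat3) : x * NormedSpace.exp ((0 : ℝ) • L) = x := by
  rw [zero_smul, NormedSpace.exp_zero, Matrix.mul_one]

lemma hasDerivAt_halfTrace_mul_exp (L A : Mat3) :
    HasDerivAt (fun t : ℝ => halfTrace A (x * NormedSpace.exp (t • L)) y)
      (halfTrace (L * A) x y) 0 := by
  simpa only [halfTrace, Matrix.mul_assoc] using
    (hasDerivAt_trace_mul_exp_mul L (y.transpose * x) A).div_const 2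

lemma hasDerivAt_zonal_mul_exp (L : Mat3) :
    HasDerivAt (fun t : ℝ => zonal P (x * NormedSpace.exp (t • L)) y)
      (zonal P.derivative x y * halfTrace L x y) 0 := by
  have harg : HasDerivAt
      (fun t : ℝ => ((y.transpose * (x * NormedSpace.exp (t • L))).trace - 1) / 2)
      (halfTrace L x y) 0 := by
    simpa only [halfTrace, Matrix.mul_assoc, Matrix.mul_one] using
      ((hasDerivAt_trace_mul_exp_mul L (y.transpose * x) 1).sub_const 1).div_const 2
  refine (HasDerivAt.comp (0 : ℝ) (P.hasDerivAt _) harg).congr_deriv ?_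
  rw [mul_exp_zero_smul, zonal]

lemma Xx_zonal :
    Xx i (zonal P) = fun x y => zonal P.derivative x y * halfTrace (Lgen i) x y :=
  funext₂ fun x y => (hasDerivAt_zonal_mul_exp P x y (Lgen i)).deriv

lemma Xx_Xx_zonal :
    Xx j (Xx i (zonal P)) = fun x y =>
      zonal P.derivative.derivative x y * halfTrace (Lgen j) x y * halfTrace (Lgen i) x y +
        zonal P.derivative x y * halfTrace (Lgen j * Lgen i) x y := by
  rw [Xx_zonal]
  refine funext₂ fun x y => ((hasDerivAt_zonal_mul_exp P.derivative x y (Lgen j)).fun_mul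
    (hasDerivAt_halfTrace_mul_exp x y (Lgen j) (Lgen i))).deriv.trans ?_
  rw [mul_exp_zero_smul]

lemma Xx_Xx_Xx_zonal :
    Xx j (Xx i (Xx k (zonal P))) = fun x y =>
      zonal P.derivative.derivative.derivative x y *
          (halfTrace (Lgen j) x y * halfTrace (Lgen i) x y * halfTrace (Lgen k) x y) +
        zonal P.derivative.derivative x y *
          (halfTrace (Lgen j * Lgen i) x y * halfTrace (Lgen k) x y +
            halfTrace (Lgen i) x y * halfTrace (Lgen j * Lgen k) x y +
            halfTrace (Lgen j) x y * halfTrace (Lgen i * Lgen k) x y) +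
        zonal P.derivative x y * halfTrace (Lgen j * (Lgen i * Lgen k)) x y := by
  rw [Xx_Xx_zonal]
  refine funext₂ fun x y =>
    ((((hasDerivAt_zonal_mul_exp P.derivative.derivative x y (Lgen j)).fun_mul
      (hasDerivAt_halfTrace_mul_exp x y (Lgen j) (Lgen i))).fun_mul
        (hasDerivAt_halfTrace_mul_exp x y (Lgen j) (Lgen k))).fun_add
      ((hasDerivAt_zonal_mul_exp P.derivative x y (Lgen j)).fun_mul
        (hasDerivAt_halfTrace_mul_exp x y (Lgen j) (Lgen i * Lgen k)))).deriv.trans ?_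
  simp only [mul_exp_zero_smul]
  ring

lemma zonal_mul_exp_right (t : ℝ) :
    zonal P x (y * NormedSpace.exp (t • Lgen k)) =
      zonal P (x * NormedSpace.exp (-t • Lgen k)) y := by
  rw [zonal, zonal, Matrix.transpose_mul, ← Matrix.exp_transpose, Matrix.transpose_smul,
    transpose_Lgen, smul_neg, neg_smul, Matrix.mul_assoc, Matrix.trace_mul_comm, Matrix.mul_assoc]

lemma Xy_zonal : Xy k (zonal P) = -Xx k (zonal P) := by
  refine funext₂ fun x y => ?_
  simp only [Xy, Xx, zonal_mul_exp_right, Pi.neg_apply]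
  rw [deriv_comp_neg (fun t : ℝ => zonal P (x * NormedSpace.exp (t • Lgen k)) y), neg_zero]

end ZonalFunctions

section CovariantHessian

variable (i j k : Fin 3)

/-- The covariant Hessian `X_j X_i f - ½ [X_j, X_i] f` in the first variable, where
`[X_j, X_i] = ∑ₙ ε_{jin} X_n`; it is symmetric in `i` and `j` for smooth `f`. -/
noncomputable def hess (j i : Fin 3) (f : Mat3 → Mat3 → ℝ) (x y : Mat3) : ℝ :=
  Xx j (Xx i f) x y - ∑ n, eps3 j i n / 2 * Xx n f x y

lemma hess_self (f : Mat3 → Mat3 → ℝ) (x y : Mat3) : hess i i f x y = Xx i (Xx i f) x y := by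
  have heps : ∀ n, eps3 i i n = 0 := by fin_cases i <;> simp [eps3]
  simp only [hess, heps, zero_div, zero_mul, Finset.sum_const_zero, sub_zero]

lemma hess_of_ne {i j n : Fin 3} (hij : i ≠ j) (hjn : j ≠ n) (hin : i ≠ n)
    (f : Mat3 → Mat3 → ℝ) (x y : Mat3) :
    hess j i f x y = Xx j (Xx i f) x y - eps3 j i n / 2 * Xx n f x y := by
  have heps : ∀ m ≠ n, eps3 j i m = 0 := by
    intro m hm
    fin_cases i <;> fin_cases j <;> fin_cases n <;> fin_cases m <;>
      simp [eps3] at hij hjn hin hm ⊢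
  rw [hess, Finset.sum_eq_single n (fun m _ hm => by rw [heps m hm, zero_div, zero_mul]) (by simp)]

lemma Xx_neg (f : Mat3 → Mat3 → ℝ) : Xx i (-f) = -Xx i f :=
  funext₂ fun _ _ => deriv.fun_neg

lemma hess_neg (f : Mat3 → Mat3 → ℝ) (x y : Mat3) : hess j i (-f) x y = -hess j i f x y := by
  simp only [hess, Xx_neg, Pi.neg_apply, mul_neg, Finset.sum_neg_distrib]
  ring

variable {f g : Mat3 → Mat3 → ℝ} {x y : Mat3}

lemma Xx_congr (h : ∀ x y, IsSO3 x → IsSO3 y → f x y = g x y) (hx : IsSO3 x) (hy : IsSO3 y) :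
    Xx i f x y = Xx i g x y := by
  unfold Xx
  congr 1 with t
  refine h _ _ (hx.mul (isSO3_exp_of_transpose_eq_neg ?_)) hy
  rw [Matrix.transpose_smul, transpose_Lgen, smul_neg]

lemma Xy_congr (h : ∀ x y, IsSO3 x → IsSO3 y → f x y = g x y) (hx : IsSO3 x) (hy : IsSO3 y) :
    Xy i f x y = Xy i g x y := by
  unfold Xy
  congr 1 with t
  refine h _ _ hx (hy.mul (isSO3_exp_of_transpose_eq_neg ?_))
  rw [Matrix.transpose_smul, transpose_Lgen, smul_neg]

lemma hess_congr (h : ∀ x y, IsSO3 x → IsSO3 y → f x y = g x y) (hx : IsSO3 x) (hy : IsSO3 y) :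
    hess j i f x y = hess j i g x y := by
  simp only [hess, Xx_congr _ h hx hy, Xx_congr j (fun _ _ => Xx_congr i h) hx hy]

lemma sum_eps3_smul_Lgen :
    ∑ n, eps3 j i n • Lgen n = Lgen j * Lgen i - Lgen i * Lgen j := by
  ext a b
  fin_cases i <;> fin_cases j <;> fin_cases a <;> fin_cases b <;>
    simp [eps3, Lgen, Fin.sum_univ_three, Matrix.sum_apply]

lemma sum_eps3_mul_halfTrace (A x y : Mat3) :
    ∑ n, eps3 j i n * halfTrace (Lgen n * A) x y =
      halfTrace (Lgen j * Lgen i * A) x y - halfTrace (Lgen i * Lgen j * A) x y := by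
  simp only [halfTrace]
  rw [← sub_div, ← Matrix.trace_sub, ← Matrix.mul_sub, ← Matrix.sub_mul, ← sum_eps3_smul_Lgen,
    Matrix.sum_mul, Matrix.mul_sum, Matrix.trace_sum, Finset.sum_div]
  refine Finset.sum_congr rfl fun n _ => ?_
  rw [Matrix.smul_mul, Matrix.mul_smul, Matrix.trace_smul, smul_eq_mul, mul_div_assoc]

lemma hess_zonal (P : Polynomial ℝ) (x y : Mat3) :
    hess j i (zonal P) x y =
      zonal P.derivative.derivative x y * (halfTrace (Lgen j) x y * halfTrace (Lgen i) x y) +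
        zonal P.derivative x y *
          ((halfTrace (Lgen j * Lgen i) x y + halfTrace (Lgen i * Lgen j) x y) / 2) := by
  have hbracket := sum_eps3_mul_halfTrace i j 1 x y
  simp only [Matrix.mul_one] at hbracket
  have hsum : ∑ n, eps3 j i n / 2 * Xx n (zonal P) x y =
      zonal P.derivative x y / 2 * ∑ n, eps3 j i n * halfTrace (Lgen n) x y := by
    rw [Finset.mul_sum]
    exact Finset.sum_congr rfl fun n _ => by rw [Xx_zonal]; ring
  rw [hess, hsum, hbracket, Xx_Xx_zonal]
  ring

lemma hess_Xx_zonal (P : Polynomial ℝ) (x y : Mat3) :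
    hess j i (Xx k (zonal P)) x y =
      zonal P.derivative.derivative.derivative x y *
          (halfTrace (Lgen j) x y * halfTrace (Lgen i) x y * halfTrace (Lgen k) x y) +
        zonal P.derivative.derivative x y *
          ((halfTrace (Lgen j * Lgen i) x y + halfTrace (Lgen i * Lgen j) x y) / 2 *
              halfTrace (Lgen k) x y +
            halfTrace (Lgen i) x y * halfTrace (Lgen j * Lgen k) x y +
            halfTrace (Lgen j) x y * halfTrace (Lgen i * Lgen k) x y) +
        zonal P.derivative x y *
          ((halfTrace (Lgen j * Lgen i * Lgen k) x y +
            halfTrace (Lgen i * Lgen j * Lgen k) x y) / 2) := by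
  have hbracket := sum_eps3_mul_halfTrace i j 1 x y
  simp only [Matrix.mul_one] at hbracket
  have hsum : ∑ n, eps3 j i n / 2 * Xx n (Xx k (zonal P)) x y =
      zonal P.derivative.derivative x y / 2 * halfTrace (Lgen k) x y *
          ∑ n, eps3 j i n * halfTrace (Lgen n) x y +
        zonal P.derivative x y / 2 * ∑ n, eps3 j i n * halfTrace (Lgen n * Lgen k) x y := by
    rw [Finset.mul_sum, Finset.mul_sum, ← Finset.sum_add_distrib]
    exact Finset.sum_congr rfl fun n _ => by rw [Xx_Xx_zonal]; ring
  rw [hess, hsum, hbracket, sum_eps3_mul_halfTrace, Xx_Xx_Xx_zonal, ← Matrix.mul_assoc]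
  ring

end CovariantHessian

section AxisFormulas

lemma cot_half_mul_one_sub_cos {ω : ℝ} (h : Real.sin (ω / 2) ≠ 0) :
    Real.cot (ω / 2) * (1 - Real.cos ω) = Real.sin ω := by
  obtain ⟨θ, rfl⟩ : ∃ θ, ω = 2 * θ := ⟨ω / 2, by ring⟩
  rw [mul_div_cancel_left₀ θ two_ne_zero] at h ⊢
  rw [Real.cot_eq_cos_div_sin, Real.cos_two_mul', Real.sin_two_mul]
  field_simp
  linear_combination (-Real.cos θ) * Real.sin_sq_add_cos_sq θ

lemma cot_half_mul_sin {ω : ℝ} (h : Real.sin (ω / 2) ≠ 0) :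
    Real.cot (ω / 2) * Real.sin ω = 1 + Real.cos ω := by
  obtain ⟨θ, rfl⟩ : ∃ θ, ω = 2 * θ := ⟨ω / 2, by ring⟩
  rw [mul_div_cancel_left₀ θ two_ne_zero] at h ⊢
  rw [Real.cot_eq_cos_div_sin, Real.cos_two_mul, Real.sin_two_mul]
  field_simp
  ring

lemma deriv_eval_cos (P : Polynomial ℝ) :
    deriv (fun t => P.eval (Real.cos t)) =
      fun t => -(Real.sin t * P.derivative.eval (Real.cos t)) := by
  ext t
  refine ((P.hasDerivAt (Real.cos t)).comp t (Real.hasDerivAt_cos t)).deriv.trans ?_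
  ring

lemma iteratedDeriv_two_eval_cos (P : Polynomial ℝ) :
    iteratedDeriv 2 (fun t => P.eval (Real.cos t)) = fun t =>
      Real.sin t ^ 2 * P.derivative.derivative.eval (Real.cos t) -
        Real.cos t * P.derivative.eval (Real.cos t) := by
  rw [iteratedDeriv_succ, iteratedDeriv_one, deriv_eval_cos]
  ext t
  have hP := (P.derivative.hasDerivAt (Real.cos t)).comp t (Real.hasDerivAt_cos t)
  refine ((Real.hasDerivAt_sin t).mul hP).neg.deriv.trans ?_
  simp only [Function.comp_apply]
  ring

lemma iteratedDeriv_three_eval_cos (P : Polynomial ℝ) (t : ℝ) :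
    iteratedDeriv 3 (fun t => P.eval (Real.cos t)) t =
      -(Real.sin t ^ 3 * P.derivative.derivative.derivative.eval (Real.cos t)) +
        3 * Real.sin t * Real.cos t * P.derivative.derivative.eval (Real.cos t) +
        Real.sin t * P.derivative.eval (Real.cos t) := by
  rw [iteratedDeriv_succ, iteratedDeriv_two_eval_cos]
  have hP := (P.derivative.hasDerivAt (Real.cos t)).comp t (Real.hasDerivAt_cos t)
  have hP' := (P.derivative.derivative.hasDerivAt (Real.cos t)).comp t (Real.hasDerivAt_cos t)
  refine ((((Real.hasDerivAt_sin t).pow 2).mul hP').sub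
    ((Real.hasDerivAt_cos t).mul hP)).deriv.trans ?_
  simp only [Function.comp_apply, Pi.pow_apply]
  push_cast
  ring

variable {C S ω : ℝ} {ν : Fin 3 → ℝ} {x y : Mat3}

lemma trace_axisRotation (hν : ∑ i, ν i ^ 2 = 1) : (axisRotation C S ν).trace = 1 + 2 * C := by
  have hcross : (crossMat ν).trace = 0 := by simp [crossMat, Matrix.trace_fin_three]
  have hνν : ν ⬝ᵥ ν = 1 := by simpa only [dotProduct, sq] using hν
  rw [axisRotation, Matrix.trace_add, Matrix.trace_add, Matrix.trace_smul, Matrix.trace_smul,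
    Matrix.trace_smul, Matrix.trace_one, Matrix.trace_vecMulVec, hcross, hνν, Fintype.card_fin,
    smul_eq_mul, smul_eq_mul, smul_zero]
  push_cast
  ring

lemma halfTrace_Lgen (hz : y.transpose * x = axisRotation C S ν) (i : Fin 3) :
    halfTrace (Lgen i) x y = -(S * ν i) := by
  rw [halfTrace, hz]
  fin_cases i <;>
    simp [Matrix.trace_fin_three, Matrix.mul_apply, Fin.sum_univ_three, axisRotation,
      Matrix.vecMulVec_apply, crossMat, Lgen] <;> ring

lemma halfTrace_Lgen_mul_Lgen (hν : ∑ i, ν i ^ 2 = 1)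
    (hz : y.transpose * x = axisRotation C S ν) (i j : Fin 3) :
    halfTrace (Lgen i * Lgen j) x y =
      ((1 - C) * (ν i * ν j) + S * crossMat ν i j - (1 + C) * (1 : Mat3) i j) / 2 := by
  rw [Fin.sum_univ_three] at hν
  rw [halfTrace, hz]
  fin_cases i <;> fin_cases j <;>
    simp [Matrix.trace_fin_three, Matrix.mul_apply, Fin.sum_univ_three, axisRotation,
      Matrix.vecMulVec_apply, crossMat, Lgen] <;> grind

lemma halfTrace_symm_Lgen_mul_Lgen (hz : y.transpose * x = axisRotation C S ν)
    (i j k : Fin 3) :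
    (halfTrace (Lgen j * Lgen i * Lgen k) x y + halfTrace (Lgen i * Lgen j * Lgen k) x y) / 2 =
      (S * ((1 : Mat3) i j * ν k + ((1 : Mat3) i k * ν j + (1 : Mat3) j k * ν i) / 2) -
        (1 - C) * (ν i * crossMat ν j k + ν j * crossMat ν i k) / 2) / 2 := by
  rw [halfTrace, halfTrace, hz]
  fin_cases i <;> fin_cases j <;> fin_cases k <;>
    simp [Matrix.trace_fin_three, Matrix.mul_apply, Fin.sum_univ_three, axisRotation,
      Matrix.vecMulVec_apply, crossMat, Lgen] <;> grind

lemma crossMat_swap (ν : Fin 3 → ℝ) (i j : Fin 3) : crossMat ν j i = -crossMat ν i j := by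
  fin_cases i <;> fin_cases j <;> simp [crossMat]

lemma zonal_eq_eval_cos (hν : ∑ i, ν i ^ 2 = 1) (hz : y.transpose * x = axisRotation C S ν)
    (P : Polynomial ℝ) : zonal P x y = P.eval C := by
  rw [zonal, hz, trace_axisRotation hν]
  congr 1
  ring

lemma hess_zonal_eq_iteratedDeriv (hω : Real.sin (ω / 2) ≠ 0) (hν : ∑ i, ν i ^ 2 = 1)
    (hz : y.transpose * x = axisRotation (Real.cos ω) (Real.sin ω) ν) (P : Polynomial ℝ)
    {φ : ℝ → ℝ} (hφ : ∀ t, φ t = P.eval (Real.cos t)) (i j : Fin 3) :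
    hess j i (zonal P) x y =
      iteratedDeriv 2 φ ω * (ν i * ν j) +
        Real.cot (ω / 2) / 2 * iteratedDeriv 1 φ ω * ((1 : Mat3) i j - ν i * ν j) := by
  replace hφ := funext hφ
  rw [hφ, iteratedDeriv_one, deriv_eval_cos, iteratedDeriv_two_eval_cos, hess_zonal]
  simp only [halfTrace_Lgen hz, halfTrace_Lgen_mul_Lgen hν hz, zonal_eq_eval_cos hν hz]
  rw [crossMat_swap, show (1 : Mat3) j i = (1 : Mat3) i j by simp only [Matrix.one_apply, eq_comm]]
  linear_combination P.derivative.eval (Real.cos ω) / 2 * ((1 : Mat3) i j - ν i * ν j) *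
    cot_half_mul_sin hω

lemma hess_Xx_zonal_eq_iteratedDeriv (hω : Real.sin (ω / 2) ≠ 0) (hν : ∑ i, ν i ^ 2 = 1)
    (hz : y.transpose * x = axisRotation (Real.cos ω) (Real.sin ω) ν) (P : Polynomial ℝ)
    {φ : ℝ → ℝ} (hφ : ∀ t, φ t = P.eval (Real.cos t)) (i j k : Fin 3) :
    hess j i (Xx k (zonal P)) x y =
      iteratedDeriv 3 φ ω * (ν i * ν j * ν k) +
        (iteratedDeriv 2 φ ω - Real.cot (ω / 2) / 2 * iteratedDeriv 1 φ ω) *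
          (Real.cot (ω / 2) / 2 * ((1 : Mat3) i j * ν k + (1 : Mat3) j k * ν i +
              (1 : Mat3) i k * ν j - 3 * (ν i * ν j * ν k)) -
            (ν i * crossMat ν j k + ν j * crossMat ν i k) / 2) -
        iteratedDeriv 1 φ ω * (((1 : Mat3) i j - ν i * ν j) * ν k) / 4 := by
  replace hφ := funext hφ
  have hradial : iteratedDeriv 2 φ ω - Real.cot (ω / 2) / 2 * iteratedDeriv 1 φ ω =
      Real.sin ω ^ 2 * P.derivative.derivative.eval (Real.cos ω) +
        (1 - Real.cos ω) / 2 * P.derivative.eval (Real.cos ω) := by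
    rw [hφ, iteratedDeriv_one, deriv_eval_cos, iteratedDeriv_two_eval_cos]
    linear_combination P.derivative.eval (Real.cos ω) / 2 * cot_half_mul_sin hω
  rw [hradial, hφ, iteratedDeriv_one, deriv_eval_cos, iteratedDeriv_three_eval_cos, hess_Xx_zonal,
    halfTrace_symm_Lgen_mul_Lgen hz]
  simp only [halfTrace_Lgen hz, halfTrace_Lgen_mul_Lgen hν hz, zonal_eq_eval_cos hν hz]
  rw [crossMat_swap ν i j, show (1 : Mat3) j i = (1 : Mat3) i j by
    simp only [Matrix.one_apply, eq_comm]]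
  linear_combination (-1 / 2 : ℝ) * ((1 : Mat3) i j * ν k + (1 : Mat3) j k * ν i +
      (1 : Mat3) i k * ν j - 3 * (ν i * ν j * ν k)) *
    (P.derivative.derivative.eval (Real.cos ω) * Real.sin ω * cot_half_mul_sin hω +
      P.derivative.eval (Real.cos ω) / 2 * cot_half_mul_one_sub_cos hω)

end AxisFormulas

section UnitVectorBounds

variable {ν : Fin 3 → ℝ}

lemma abs_apply_le_one {ι : Type*} [Fintype ι] {ν : ι → ℝ} (hν : ∑ i, ν i ^ 2 = 1) (i : ι) :
    |ν i| ≤ 1 := by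
  rw [← sq_le_one_iff_abs_le_one, ← hν]
  exact Finset.single_le_sum (fun j _ => sq_nonneg (ν j)) (Finset.mem_univ i)

lemma sq_add_sq_le_one {ι : Type*} [Fintype ι] {ν : ι → ℝ} (hν : ∑ i, ν i ^ 2 = 1) {i j : ι}
    (hij : i ≠ j) : ν i ^ 2 + ν j ^ 2 ≤ 1 := by
  rw [← hν]
  exact Finset.add_le_sum (fun j _ => sq_nonneg (ν j)) (Finset.mem_univ i) (Finset.mem_univ j) hij

lemma abs_mul_le_half {a b : ℝ} (h : a ^ 2 + b ^ 2 ≤ 1) : |a * b| ≤ 1 / 2 := by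
  rw [abs_le]
  constructor <;> nlinarith [sq_nonneg (a - b), sq_nonneg (a + b)]

lemma abs_crossMat_le_one (hν : ∑ i, ν i ^ 2 = 1) (i j : Fin 3) : |crossMat ν i j| ≤ 1 := by
  fin_cases i <;> fin_cases j <;> simp [crossMat, abs_apply_le_one hν]

lemma abs_axis_mul_crossMat_add_le (hν : ∑ i, ν i ^ 2 = 1) (i j k : Fin 3) :
    |ν i * crossMat ν j k + ν j * crossMat ν i k| ≤ 2 := by
  have hi := mul_le_one₀ (abs_apply_le_one hν i) (abs_nonneg _) (abs_crossMat_le_one hν j k)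
  have hj := mul_le_one₀ (abs_apply_le_one hν j) (abs_nonneg _) (abs_crossMat_le_one hν i k)
  refine (abs_add_le _ _).trans ?_
  rw [abs_mul, abs_mul]
  linarith

lemma abs_one_sub_axis_mul_le (hν : ∑ i, ν i ^ 2 = 1) (i j k : Fin 3) :
    |((1 : Mat3) i j - ν i * ν j) * ν k| ≤ 2 := by
  have hone : |(1 : Mat3) i j| ≤ 1 := by
    rw [Matrix.one_apply]
    split_ifs <;> simp
  have hij := mul_le_one₀ (abs_apply_le_one hν i) (abs_nonneg _) (abs_apply_le_one hν j)
  have hsub := abs_sub ((1 : Mat3) i j) (ν i * ν j)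
  rw [abs_mul (ν i)] at hsub
  rw [abs_mul]
  exact (mul_le_of_le_one_right (abs_nonneg _) (abs_apply_le_one hν k)).trans (by linarith)

lemma abs_three_mul_sub_cube_le {a : ℝ} (ha : |a| ≤ 1) :
    |3 * a - 3 * (a * a * a)| ≤ 2 * (1 - |a * a * a|) := by
  have hfactor : 3 * a - 3 * (a * a * a) = 3 * (1 - |a| ^ 2) * a := by rw [sq_abs]; ring
  have h0 := abs_nonneg a
  rw [hfactor, abs_mul, abs_of_nonneg (by nlinarith), abs_mul, abs_mul]
  nlinarith [mul_nonneg (sq_nonneg (1 - |a|)) (by linarith : 0 ≤ |a| + 2)]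

lemma abs_sub_three_mul_sq_mul_le {a b : ℝ} (h : a ^ 2 + b ^ 2 ≤ 1) :
    |b - 3 * (a * a * b)| ≤ 2 * (1 - |a * a * b|) := by
  have hfactor : b - 3 * (a * a * b) = (1 - 3 * a ^ 2) * b := by ring
  have h0 := abs_nonneg b
  have hb : |b| ≤ 1 := by
    rw [← sq_le_one_iff_abs_le_one]
    linarith [sq_nonneg a]
  have hab : a ^ 2 ≤ 1 - |b| ^ 2 := by rw [sq_abs]; linarith
  rw [hfactor, abs_mul, abs_mul, abs_mul_self, ← sq]
  rcases abs_cases (1 - 3 * a ^ 2) with ⟨habs, -⟩ | ⟨habs, -⟩ <;> rw [habs]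
  · nlinarith [mul_nonneg (sq_nonneg a) h0]
  · nlinarith [mul_le_mul_of_nonneg_right hab h0, mul_nonneg h0 (sq_nonneg (|b| - 1 / 2)),
      sq_nonneg (|b| - 1 / 2)]

lemma three_mul_abs_mul_mul_le {a b c : ℝ} (h : a ^ 2 + b ^ 2 + c ^ 2 = 1) :
    |3 * (a * b * c)| ≤ 2 * (1 - |a * b * c|) := by
  have h0 := abs_nonneg c
  have hc : |c| ≤ 1 := by
    rw [← sq_le_one_iff_abs_le_one]
    linarith [sq_nonneg a, sq_nonneg b]
  have hab : |a| * |b| ≤ (1 - |c| ^ 2) / 2 := by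
    rw [sq_abs]
    nlinarith [sq_nonneg (|a| - |b|), sq_abs a, sq_abs b]
  rw [abs_mul, abs_of_pos (three_pos : (0 : ℝ) < 3), abs_mul, abs_mul]
  nlinarith [mul_le_mul_of_nonneg_right hab h0, mul_nonneg h0 (sq_nonneg (|c| - 1 / 2)),
      sq_nonneg (|c| - 1 / 2)]

lemma abs_symm_coeff_le (hν : ∑ i, ν i ^ 2 = 1) (i j k : Fin 3) :
    |(1 : Mat3) i j * ν k + (1 : Mat3) j k * ν i + (1 : Mat3) i k * ν j -
        3 * (ν i * ν j * ν k)| ≤ 2 * (1 - |ν i * ν j * ν k|) := by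
  by_cases hij : i = j
  · subst hij
    by_cases hik : i = k
    · subst hik
      rw [Matrix.one_apply_eq]
      convert abs_three_mul_sub_cube_le (abs_apply_le_one hν i) using 2
      ring
    · rw [Matrix.one_apply_eq, Matrix.one_apply_ne hik]
      convert abs_sub_three_mul_sq_mul_le (sq_add_sq_le_one hν hik) using 2
      ring
  by_cases hik : i = k
  · subst hik
    rw [Matrix.one_apply_eq, Matrix.one_apply_ne hij, Matrix.one_apply_ne' hij]
    convert abs_sub_three_mul_sq_mul_le (sq_add_sq_le_one hν hij) using 2
    · ring
    · ring_nf
  by_cases hjk : j = k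
  · subst hjk
    rw [Matrix.one_apply_eq, Matrix.one_apply_ne hij]
    convert abs_sub_three_mul_sq_mul_le (sq_add_sq_le_one hν (Ne.symm hij)) using 2
    · ring
    · ring_nf
  have hsum : ν i ^ 2 + ν j ^ 2 + ν k ^ 2 = 1 := by
    rw [← hν, Fin.sum_univ_three]
    fin_cases i <;> fin_cases j <;> fin_cases k <;> simp at hij hik hjk ⊢ <;> ring
  rw [Matrix.one_apply_ne hij, Matrix.one_apply_ne hik, Matrix.one_apply_ne hjk]
  simpa only [zero_mul, add_zero, zero_sub, abs_neg] using three_mul_abs_mul_mul_le hsum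

end UnitVectorBounds

section HessianEstimates

lemma cot_nonneg_of_le_pi_div_two {x : ℝ} (h0 : 0 ≤ x) (hx : x ≤ π / 2) : 0 ≤ Real.cot x := by
  rw [Real.cot_eq_cos_div_sin]
  exact div_nonneg (Real.cos_nonneg_of_neg_pi_div_two_le_of_le (by linarith [Real.pi_pos]) hx)
    (Real.sin_nonneg_of_nonneg_of_le_pi h0 (by linarith [Real.pi_pos]))

lemma cot_le_inv {x : ℝ} (h0 : 0 < x) (hx : x ≤ π / 2) : Real.cot x ≤ x⁻¹ := by
  rcases hx.eq_or_lt with rfl | hlt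
  · rw [Real.cot_eq_cos_div_sin, Real.cos_pi_div_two, zero_div]
    positivity
  · rw [← Real.tan_inv_eq_cot]
    exact inv_anti₀ h0 (Real.le_tan h0.le hlt)

lemma cot_half_div_two_le {ω M : ℝ} (hM : 0 < M) (hω : π / (2 * M) ≤ ω) (hωπ : ω ≤ π) :
    Real.cot (ω / 2) / 2 ≤ 0.64 * M := by
  have hpos : 0 < π / (2 * M) := by positivity
  calc Real.cot (ω / 2) / 2 ≤ (ω / 2)⁻¹ / 2 := by
        gcongr
        exact cot_le_inv (by linarith) (by linarith)
    _ = ω⁻¹ := by ring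
    _ ≤ (π / (2 * M))⁻¹ := inv_anti₀ hpos hω
    _ = 2 / π * M := by rw [inv_div]; ring
    _ ≤ 0.64 * M := by
        gcongr
        rw [div_le_iff₀ Real.pi_pos]
        linarith [Real.pi_gt_d2]

lemma abs_sub_mul_le {s M K c d₁ d₂ : ℝ} (hM : 0 ≤ M)
    (h₁ : |d₁| ≤ 2 * s * (K * M)) (h₂ : |d₂| ≤ (4 * s + 1) * (K * M ^ 2)) (hc0 : 0 ≤ c)
    (hc : c ≤ 0.64 * M) : |d₂ - c * d₁| ≤ (5.28 * s + 1) * (K * M ^ 2) := by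
  calc |d₂ - c * d₁| ≤ |d₂| + c * |d₁| := by
        rw [← abs_of_nonneg hc0, ← abs_mul, abs_of_nonneg hc0]
        exact abs_sub _ _
    _ ≤ (4 * s + 1) * (K * M ^ 2) + 0.64 * M * (2 * s * (K * M)) := by gcongr
    _ = (5.28 * s + 1) * (K * M ^ 2) := by ring

lemma abs_third_order_le {s M K c q κ E B D d₁ d₃ : ℝ} (hs : 6 ≤ s) (hM : 13 ≤ M) (hK : 0 ≤ K)
    (h₁ : |d₁| ≤ 2 * s * (K * M)) (hD : |D| ≤ (5.28 * s + 1) * (K * M ^ 2))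
    (h₃ : |d₃| ≤ (9 * s - 2) * (K * M ^ 3)) (hc0 : 0 ≤ c) (hc : c ≤ 0.64 * M)
    (hκ : |κ| ≤ 2 * (1 - |q|)) (hE : |E| ≤ 2) (hB : |B| ≤ 2) :
    |d₃ * q + D * (c * κ - E / 2) - d₁ * B / 4| ≤ 1.2 * ((9 * s - 2) * (K * M ^ 3)) := by
  have hq1 : |q| ≤ 1 := by linarith [abs_nonneg κ]
  have : 0 ≤ K * M ^ 3 := by positivity
  have hthird : |d₃ * q| ≤ (9 * s - 2) * (K * M ^ 3) * |q| := by
    rw [abs_mul]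
    gcongr
  have hsecond : |D * (c * κ - E / 2)| ≤
      (5.28 * s + 1) * (K * M ^ 2) * (0.64 * M * (2 * (1 - |q|)) + M / 13) := by
    rw [abs_mul]
    refine mul_le_mul hD ?_ (abs_nonneg _) (by positivity)
    refine (abs_sub _ _).trans (add_le_add ?_ ?_)
    · rw [abs_mul, abs_of_nonneg hc0]
      gcongr
    · rw [abs_div, abs_two]
      linarith
  have hKM : K * M ≤ K * M ^ 3 / 169 := by
    have : K * M * 13 ^ 2 ≤ K * M * M ^ 2 := by gcongr
    linarith
  have hfirst : |d₁ * B / 4| ≤ s / 169 * (K * M ^ 3) := by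
    rw [abs_div, abs_mul, abs_of_pos (four_pos : (0 : ℝ) < 4)]
    have := mul_le_mul h₁ hB (abs_nonneg _) (by positivity)
    nlinarith
  have hcoeff : (9 * s - 2) * |q| + (5.28 * s + 1) * (1.28 * (1 - |q|) + 1 / 13) + s / 169 ≤
      1.2 * (9 * s - 2) := by
    nlinarith [abs_nonneg q]
  calc |d₃ * q + D * (c * κ - E / 2) - d₁ * B / 4|
      ≤ |d₃ * q| + |D * (c * κ - E / 2)| + |d₁ * B / 4| :=
        (abs_sub _ _).trans (by gcongr; exact abs_add_le _ _)
    _ ≤ ((9 * s - 2) * |q| + (5.28 * s + 1) * (1.28 * (1 - |q|) + 1 / 13) + s / 169) *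
        (K * M ^ 3) := by linarith
    _ ≤ 1.2 * (9 * s - 2) * (K * M ^ 3) := by gcongr
    _ = 1.2 * ((9 * s - 2) * (K * M ^ 3)) := mul_assoc _ _ _

lemma sin_half_rotAngle_ne_zero {z : Mat3} (hz : 0 < rotAngle z) :
    Real.sin (rotAngle z / 2) ≠ 0 := by
  have hπ : rotAngle z ≤ π := Real.arccos_le_pi _
  exact (Real.sin_pos_of_pos_of_lt_pi (by linarith) (by linarith)).ne'

section RadialBounds

variable {s M K : ℝ} {x y : Mat3} {P : Polynomial ℝ} {φ : ℝ → ℝ}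

lemma abs_hess_zonal_le (hs : 1 ≤ s) (hM : 0 < M) (hK : 0 ≤ K) (hx : IsSO3 x) (hy : IsSO3 y)
    (hsep : π / (2 * M) ≤ rotAngle (y.transpose * x)) (hφ : ∀ t, φ t = P.eval (Real.cos t))
    (h₁ : |iteratedDeriv 1 φ (rotAngle (y.transpose * x))| ≤ 2 * s * (K * M))
    (h₂ : |iteratedDeriv 2 φ (rotAngle (y.transpose * x))| ≤ (4 * s + 1) * (K * M ^ 2))
    {i j : Fin 3} (hij : i ≠ j) :
    |hess j i (zonal P) x y| ≤ (4 * s + 1) * (K * M ^ 2) := by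
  have hω : 0 < rotAngle (y.transpose * x) := lt_of_lt_of_le (by positivity) hsep
  have hωπ : rotAngle (y.transpose * x) ≤ π := Real.arccos_le_pi _
  obtain ⟨ν, hν, hz⟩ := (hy.transpose.mul hx).exists_axis hω
  rw [hess_zonal_eq_iteratedDeriv (sin_half_rotAngle_ne_zero hω) hν hz P hφ,
    Matrix.one_apply_ne hij]
  set ω := rotAngle (y.transpose * x)
  have hradial := abs_sub_mul_le hM.le h₁ h₂
    (div_nonneg (cot_nonneg_of_le_pi_div_two (x := ω / 2) (by linarith) (by linarith)) two_pos.le)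
    (cot_half_div_two_le hM hsep hωπ)
  have hνν : |ν i * ν j| ≤ 1 / 2 := abs_mul_le_half (sq_add_sq_le_one hν hij)
  have hKM : 0 ≤ K * M ^ 2 := by positivity
  calc _ = |iteratedDeriv 2 φ ω - Real.cot (ω / 2) / 2 * iteratedDeriv 1 φ ω| * |ν i * ν j| := by
        rw [← abs_mul]
        ring_nf
    _ ≤ (5.28 * s + 1) * (K * M ^ 2) * (1 / 2) := by gcongr
    _ ≤ (4 * s + 1) * (K * M ^ 2) := by nlinarith

lemma abs_hess_Xx_zonal_le (hs : 6 ≤ s) (hM : 13 ≤ M) (hK : 0 ≤ K) (hx : IsSO3 x) (hy : IsSO3 y)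
    (hsep : π / (2 * M) ≤ rotAngle (y.transpose * x)) (hφ : ∀ t, φ t = P.eval (Real.cos t))
    (h₁ : |iteratedDeriv 1 φ (rotAngle (y.transpose * x))| ≤ 2 * s * (K * M))
    (h₂ : |iteratedDeriv 2 φ (rotAngle (y.transpose * x))| ≤ (4 * s + 1) * (K * M ^ 2))
    (h₃ : |iteratedDeriv 3 φ (rotAngle (y.transpose * x))| ≤ (9 * s - 2) * (K * M ^ 3))
    (i j k : Fin 3) :
    |hess j i (Xx k (zonal P)) x y| ≤ 1.2 * ((9 * s - 2) * (K * M ^ 3)) := by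
  have hM0 : 0 < M := by linarith
  have hω : 0 < rotAngle (y.transpose * x) := lt_of_lt_of_le (by positivity) hsep
  have hωπ : rotAngle (y.transpose * x) ≤ π := Real.arccos_le_pi _
  obtain ⟨ν, hν, hz⟩ := (hy.transpose.mul hx).exists_axis hω
  have hcot : 0 ≤ Real.cot (rotAngle (y.transpose * x) / 2) / 2 :=
    div_nonneg (cot_nonneg_of_le_pi_div_two (by linarith) (by linarith)) two_pos.le
  have hcot' := cot_half_div_two_le hM0 hsep hωπ
  rw [hess_Xx_zonal_eq_iteratedDeriv (sin_half_rotAngle_ne_zero hω) hν hz P hφ]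
  exact abs_third_order_le hs hM hK h₁ (abs_sub_mul_le hM0.le h₁ h₂ hcot hcot') h₃ hcot hcot'
    (abs_symm_coeff_le hν i j k) (abs_axis_mul_crossMat_add_le hν i j k)
    (abs_one_sub_axis_mul_le hν i j k)

end RadialBounds

/-- The polynomial `F` with `σ̃_N(t) = F (cos t)`. -/
noncomputable def kernelPoly (s N : ℕ) : Polynomial ℝ :=
  ∑ k ∈ Finset.Icc (-(N : ℤ)) (N : ℤ),
    Polynomial.C (1 / gnorm s N * gtilde s ((k : ℝ) / (2 * ((N : ℝ) + 1)))) *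
      Polynomial.Chebyshev.T ℝ k

lemma sigmaT_eq_eval_cos (s N : ℕ) (t : ℝ) :
    sigmaT s N t = (kernelPoly s N).eval (Real.cos t) := by
  rw [sigmaT, kernelPoly, Polynomial.eval_finsetSum, Finset.mul_sum, Complex.re_sum]
  refine Finset.sum_congr rfl fun k _ => ?_
  rw [Polynomial.eval_mul, Polynomial.eval_C, Polynomial.Chebyshev.T_real_cos, ← mul_assoc,
    ← Complex.ofReal_one, ← Complex.ofReal_div, ← Complex.ofReal_mul, Complex.re_ofReal_mul,
    ← Complex.ofReal_intCast, ← Complex.ofReal_mul, Complex.exp_ofReal_mul_I_re]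

variable {s N : ℕ} {x y : Mat3}

lemma sigmaK_eq_zonal (hx : IsSO3 x) (hy : IsSO3 y) :
    sigmaK s N x y = zonal (kernelPoly s N) x y := by
  rw [sigmaK, sigmaT_eq_eval_cos, hy.inv_eq_transpose, (hy.transpose.mul hx).cos_rotAngle, zonal]

lemma hess_sigmaK (i j : Fin 3) (hx : IsSO3 x) (hy : IsSO3 y) :
    hess j i (sigmaK s N) x y = hess j i (zonal (kernelPoly s N)) x y :=
  hess_congr i j (fun _ _ => sigmaK_eq_zonal) hx hy

lemma hess_Xy_sigmaK (i j k : Fin 3) (hx : IsSO3 x) (hy : IsSO3 y) :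
    hess j i (Xy k (sigmaK s N)) x y = -hess j i (Xx k (zonal (kernelPoly s N))) x y := by
  rw [hess_congr i j (fun _ _ => Xy_congr k fun _ _ => sigmaK_eq_zonal) hx hy, Xy_zonal, hess_neg]

lemma pow_div_mul_pow {M ω : ℝ} (hM : M ≠ 0) {l : ℕ} (hl : l ≤ s) :
    M ^ l / (M * ω) ^ s = 1 / (M ^ (s - l) * ω ^ s) := by
  rw [mul_pow, ← pow_sub_mul_pow M hl, mul_right_comm, div_mul_cancel_right₀ (pow_ne_zero l hM),
    one_div]

/-- The factor common to the decay bounds of all derivatives of `σ̃_N`: the bound on the `l`-th one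
is `decayFactor s N ω * (N + 1) ^ l` times a linear polynomial in `s`. -/
noncomputable def decayFactor (s N : ℕ) (ω : ℝ) : ℝ :=
  1.02 * (s - 1).factorial * 2 ^ s / (((N : ℝ) + 1) * ω) ^ s

lemma decayFactor_nonneg {ω : ℝ} (hω : 0 ≤ ω) : 0 ≤ decayFactor s N ω := by
  rw [decayFactor]
  positivity

lemma abs_iteratedDeriv_sigmaT_le_decayFactor (hs : Even s) (hs6 : 6 ≤ s) (hN : 2 * s ≤ N) {ω : ℝ}
    (hω : 0 < ω) (hωπ : ω ≤ π) :
    |iteratedDeriv 1 (sigmaT s N) ω| ≤ 2 * s * (decayFactor s N ω * (N + 1)) ∧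
    |iteratedDeriv 2 (sigmaT s N) ω| ≤ (4 * s + 1) * (decayFactor s N ω * (N + 1) ^ 2) ∧
    |iteratedDeriv 3 (sigmaT s N) ω| ≤ (9 * s - 2) * (decayFactor s N ω * (N + 1) ^ 3) := by
  have hbound := fun l (hl : l ≤ 3) => abs_iteratedDeriv_sigmaT_le hs hs6 hN hω hωπ hl
  refine ⟨(hbound 1 (by norm_num)).trans_eq ?_, (hbound 2 (by norm_num)).trans_eq ?_,
    (hbound 3 le_rfl).trans_eq ?_⟩ <;>
  · simp only [cConst, decayFactor]
    ring

theorem abs_hess_sigmaK_le (hs : Even s) (hs6 : 6 ≤ s) (hN : 2 * s ≤ N) (hx : IsSO3 x)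
    (hy : IsSO3 y) (hsep : π / (2 * ((N : ℝ) + 1)) ≤ rotAngle (y⁻¹ * x)) {i j : Fin 3}
    (hij : i ≠ j) :
    |hess j i (sigmaK s N) x y| ≤
      cConst 2 s / (((N : ℝ) + 1) ^ (s - 2) * rotAngle (y⁻¹ * x) ^ s) := by
  rw [hy.inv_eq_transpose] at hsep ⊢
  have hM : (0 : ℝ) < N + 1 := by positivity
  have hω : 0 < rotAngle (y.transpose * x) := lt_of_lt_of_le (by positivity) hsep
  obtain ⟨h₁, h₂, -⟩ := abs_iteratedDeriv_sigmaT_le_decayFactor hs hs6 hN hω (Real.arccos_le_pi _)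
  rw [hess_sigmaK i j hx hy]
  refine (abs_hess_zonal_le (by exact_mod_cast (by omega : 1 ≤ s)) hM (decayFactor_nonneg hω.le)
    hx hy hsep (sigmaT_eq_eval_cos s N) h₁ h₂ hij).trans_eq ?_
  rw [div_eq_mul_one_div, ← pow_div_mul_pow hM.ne' (by omega), cConst, decayFactor]
  ring

theorem abs_hess_Xy_sigmaK_le (hs : Even s) (hs6 : 6 ≤ s) (hN : 2 * s ≤ N) (hx : IsSO3 x)
    (hy : IsSO3 y) (hsep : π / (2 * ((N : ℝ) + 1)) ≤ rotAngle (y⁻¹ * x)) (i j k : Fin 3) :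
    |hess j i (Xy k (sigmaK s N)) x y| ≤
      1.2 * cConst 3 s / (((N : ℝ) + 1) ^ (s - 3) * rotAngle (y⁻¹ * x) ^ s) := by
  rw [hy.inv_eq_transpose] at hsep ⊢
  have hM : (13 : ℝ) ≤ N + 1 := by exact_mod_cast (by omega : 13 ≤ N + 1)
  have hω : 0 < rotAngle (y.transpose * x) := lt_of_lt_of_le (by positivity) hsep
  obtain ⟨h₁, h₂, h₃⟩ :=
    abs_iteratedDeriv_sigmaT_le_decayFactor hs hs6 hN hω (Real.arccos_le_pi _)
  rw [hess_Xy_sigmaK i j k hx hy, abs_neg]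
  refine (abs_hess_Xx_zonal_le (by exact_mod_cast hs6) hM (decayFactor_nonneg hω.le) hx hy hsep
    (sigmaT_eq_eval_cos s N) h₁ h₂ h₃ i j k).trans_eq ?_
  rw [div_eq_mul_one_div, ← pow_div_mul_pow (by positivity) (by omega), cConst, decayFactor]
  · ring
  all_goals norm_num

end HessianEstimates

theorem localized_hessian_kernel_bounds
    (s N : ℕ) (hs_even : Even s) (hs : 6 ≤ s) (hN : 2 * s ≤ N)
    (x y : Mat3) (hx : IsSO3 x) (hy : IsSO3 y)
    (hsep : π / (2 * ((N : ℝ) + 1)) ≤ rotAngle (y⁻¹ * x)) :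
    (∀ i k : Fin 3,
      |Xx i (Xx i (Xy k (sigmaK s N))) x y| ≤
        1.2 * cConst 3 s / (((N : ℝ) + 1) ^ (s - 3) * rotAngle (y⁻¹ * x) ^ s)) ∧
    (∀ i j n : Fin 3, i ≠ j → j ≠ n → i ≠ n →
      (|Xx j (Xx i (sigmaK s N)) x y - (eps3 j i n / 2) * Xx n (sigmaK s N) x y| ≤
          cConst 2 s / (((N : ℝ) + 1) ^ (s - 2) * rotAngle (y⁻¹ * x) ^ s)) ∧
      ∀ k : Fin 3, k = i ∨ k = j ∨ k = n →
        |Xx j (Xx i (Xy k (sigmaK s N))) x y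
            - (eps3 j i n / 2) * Xx n (Xy k (sigmaK s N)) x y| ≤
          1.2 * cConst 3 s / (((N : ℝ) + 1) ^ (s - 3) * rotAngle (y⁻¹ * x) ^ s)) := by
  refine ⟨fun i k => ?_, fun i j n hij hjn hin => ⟨?_, fun k _ => ?_⟩⟩
  · rw [← hess_self]
    exact abs_hess_Xy_sigmaK_le hs_even hs hN hx hy hsep i i k
  · rw [← hess_of_ne hij hjn hin]
    exact abs_hess_sigmaK_le hs_even hs hN hx hy hsep hij
  · rw [← hess_of_ne hij hjn hin]
    exact abs_hess_Xy_sigmaK_le hs_even hs hN hx hy hsep i j k
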